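/- For strict partitions μ ⊆ λ of lengths p and q, the generalized Q-function satisfies the Józefiak–Pragacz–Nimmo type Pfaffian identity: Q_{λ/μ}(X, Y) = Pf of the antisymmetric block matrix with upper-left block ( Q_{(λ_i, λ_j)}(X, Y) )_{1 ≤ i,j ≤ l}, upper-right block ( Q_{(λ_i − μ_{m−k+1})}(τ^{μ_{m−k+1}}(X, Y)) )_{1 ≤ i ≤ l, 1 ≤ k ≤ m}, lower-left block the negative transpose of the upper-right, and lower-right zero block, where l = p or p+1 according as p+q is even or odd, m = q, Q_{(λ_i,λ_j)} is antisymmetrized as in the row-based identity, and Q_{(λ_i − μ_j)}(τ^{μ_j}(X,Y)) = 1 if λ_i = μ_j and = 0 if λ_i < μ_j. -/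

import Mathlib

open Finset
open scoped Classical


/-- Content of a box `(i,j)` is `j - i`. -/
def content (p : ℕ × ℕ) : ℤ := (p.2 : ℤ) - (p.1 : ℤ)

/-- Boxes of the shifted skew diagram of strict partitions `lam/mu` (0-indexed):
row `i < l` occupies columns `i + mu i ≤ j < i + lam i`. -/
def shiftedCells (lam mu : ℕ → ℕ) (l : ℕ) : Finset (ℕ × ℕ) :=
  (Finset.range l ×ˢ Finset.range (l + lam 0)).filter fun p =>
    p.1 + mu p.1 ≤ p.2 ∧ p.2 < p.1 + lam p.1

/-- A primed-alphabet entry: `(k, true)` stands for the primed entry `(k+1)'` and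
`(k, false)` for the unprimed entry `k+1`.  `ordE` realizes the total order
`1' < 1 < 2' < 2 < ⋯ < n' < n`. -/
def ordE {n : ℕ} (e : Fin n × Bool) : ℕ := 2 * (e.1 : ℕ) + (if e.2 then 0 else 1)

/-- The ninth variation (generalized) skew Q-function: sum over primed shifted
tableaux on the cell set `C` (entries weakly increasing along rows and columns,
no repeated primed entry in a row, no repeated unprimed entry in a column),
weighting an unprimed entry `k` in a box of content `c` by `X k c` and a primed
entry `k'` by `Y k c`. -/
noncomputable def QGen {R : Type*} [CommRing R] (n : ℕ) (C : Finset (ℕ × ℕ))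
    (X Y : Fin n → ℤ → R) : R :=
  ∑ T ∈ Finset.univ.filter (fun T : {p // p ∈ C} → Fin n × Bool =>
      (∀ p q : {p // p ∈ C}, (q : ℕ × ℕ).1 = (p : ℕ × ℕ).1 ∧
          (q : ℕ × ℕ).2 = (p : ℕ × ℕ).2 + 1 →
          ordE (T p) ≤ ordE (T q) ∧ ¬(T p = T q ∧ (T p).2 = true)) ∧
      (∀ p q : {p // p ∈ C}, (q : ℕ × ℕ).1 = (p : ℕ × ℕ).1 + 1 ∧
          (q : ℕ × ℕ).2 = (p : ℕ × ℕ).2 →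
          ordE (T p) ≤ ordE (T q) ∧ ¬(T p = T q ∧ (T p).2 = false))),
    ∏ p : {p // p ∈ C},
      (if (T p).2 then Y (T p).1 (content (p : ℕ × ℕ)) else X (T p).1 (content (p : ℕ × ℕ)))

/-- Cells of a single row of `r` boxes, with contents `0, 1, …, r-1`. -/
def rowCells (r : ℕ) : Finset (ℕ × ℕ) := (Finset.range r).image fun j => (0, j)

/-- The Pfaffian of a `2m × 2m` matrix, as the sum over perfect matchings
(encoded as permutations `σ` in canonical form) of the sign of `σ` times the
product of the matched entries. -/
noncomputable def pfaffian {R : Type*} [CommRing R] {m : ℕ}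
    (A : Matrix (Fin (2 * m)) (Fin (2 * m)) R) : R :=
  ∑ σ ∈ Finset.univ.filter (fun σ : Equiv.Perm (Fin (2 * m)) =>
      (∀ i : Fin m, σ ⟨2 * (i : ℕ), by have := i.isLt; omega⟩ <
          σ ⟨2 * (i : ℕ) + 1, by have := i.isLt; omega⟩) ∧
      (∀ i j : Fin m, i < j → σ ⟨2 * (i : ℕ), by have := i.isLt; omega⟩ <
          σ ⟨2 * (j : ℕ), by have := j.isLt; omega⟩)),
    (Equiv.Perm.sign σ : ℤ) •
      ∏ i : Fin m, A (σ ⟨2 * (i : ℕ), by have := i.isLt; omega⟩)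
        (σ ⟨2 * (i : ℕ) + 1, by have := i.isLt; omega⟩)

/-- The generalized skew Q-function of the two-row shifted shape `(a, b)`
(for `b = 0`, the one-row shape `(a)`). -/
noncomputable def qTwoRow {R : Type*} [CommRing R] (n a b : ℕ) (X Y : Fin n → ℤ → R) : R :=
  QGen n (shiftedCells (fun i => if i = 0 then a else if i = 1 then b else 0) (fun _ => 0) 2) X Y

/-- `Q_{(r)}(τ^m(X,Y))`: the generalized Q-function of a single row of `r`
boxes whose leftmost box has content `m`; it is `1` for `r = 0` and `0` for
`r < 0`. -/
noncomputable def qRowShift {R : Type*} [CommRing R] (n : ℕ) (r m : ℤ)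
    (X Y : Fin n → ℤ → R) : R :=
  if r < 0 then 0
  else QGen n (rowCells r.toNat) (fun k c => X k (m + c)) (fun k c => Y k (m + c))

/-- The permutation of `Fin (N + 2)` fixing `0`, sending `1` to `k + 1`, and acting as `σ`
on the remaining points in an order preserving way. -/
def permInsertPair {N : ℕ} (k : Fin (N + 1)) (σ : Equiv.Perm (Fin N)) :
    Equiv.Perm (Fin (N + 2)) :=
  Equiv.Perm.decomposeFin.symm
    (0, k.cycleRange.symm * Equiv.Perm.decomposeFin.symm (0, σ))

theorem permInsertPair_zero {N : ℕ} (k : Fin (N + 1)) (σ : Equiv.Perm (Fin N)) :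
    permInsertPair k σ 0 = 0 := by
  simp [permInsertPair]

theorem permInsertPair_one {N : ℕ} (k : Fin (N + 1)) (σ : Equiv.Perm (Fin N)) :
    permInsertPair k σ (Fin.succ 0) = k.succ := by
  rw [permInsertPair, Equiv.Perm.decomposeFin_symm_apply_succ]
  simp

theorem permInsertPair_succ_succ {N : ℕ} (k : Fin (N + 1)) (σ : Equiv.Perm (Fin N)) (j : Fin N) :
    permInsertPair k σ j.succ.succ = (k.succAbove (σ j)).succ := by
  rw [permInsertPair, Equiv.Perm.decomposeFin_symm_apply_succ]
  simp

theorem sign_permInsertPair {N : ℕ} (k : Fin (N + 1)) (σ : Equiv.Perm (Fin N)) :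
    (Equiv.Perm.sign (permInsertPair k σ) : ℤ) = (-1) ^ (k : ℕ) * Equiv.Perm.sign σ := by
  simp [permInsertPair, Equiv.Perm.decomposeFin.symm_sign]

theorem exists_permInsertPair {N : ℕ} (σ : Equiv.Perm (Fin (N + 2))) (h : σ 0 = 0) :
    ∃ k τ, permInsertPair k τ = σ := by
  obtain ⟨⟨p, e⟩, rfl⟩ := Equiv.Perm.decomposeFin.symm.surjective σ
  obtain rfl : p = 0 := by simpa using h
  obtain ⟨⟨p', τ⟩, h'⟩ :=
    Equiv.Perm.decomposeFin.symm.surjective ((e 0).cycleRange * e)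
  obtain rfl : p' = 0 := by
    have := congrArg (fun f => f 0) h'
    simpa using this
  refine ⟨e 0, τ, ?_⟩
  rw [permInsertPair, h']
  congr 2
  ext x
  simp

theorem pfaffian_congr {R : Type*} [CommRing R] {m : ℕ}
    {A B : Matrix (Fin (2 * m)) (Fin (2 * m)) R} (h : ∀ i j, i < j → A i j = B i j) :
    pfaffian A = pfaffian B := by
  refine Finset.sum_congr rfl fun σ hσ => ?_
  rw [Finset.mem_filter] at hσ
  congr 1
  exact Finset.prod_congr rfl fun i _ => h _ _ (hσ.2.1 i)

theorem pfaffian_zero {R : Type*} [CommRing R] (A : Matrix (Fin (2 * 0)) (Fin (2 * 0)) R) :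
    pfaffian A = 1 := by
  unfold pfaffian
  rw [Finset.sum_eq_single 1]
  · simp
  · intro b _ hb
    exact absurd (Equiv.ext fun x => x.elim0) hb
  · intro h
    exact absurd (Finset.mem_filter.2 ⟨Finset.mem_univ _, fun i => i.elim0, fun i => i.elim0⟩) h

/-- The canonical form of a perfect matching of `Fin (2 * m)`. -/
def IsMatchingForm {m : ℕ} (σ : Equiv.Perm (Fin (2 * m))) : Prop :=
  (∀ i : Fin m, σ ⟨2 * (i : ℕ), by have := i.isLt; omega⟩ <
          σ ⟨2 * (i : ℕ) + 1, by have := i.isLt; omega⟩) ∧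
      (∀ i j : Fin m, i < j → σ ⟨2 * (i : ℕ), by have := i.isLt; omega⟩ <
          σ ⟨2 * (j : ℕ), by have := j.isLt; omega⟩)

theorem IsMatchingForm.apply_zero {m : ℕ} {σ : Equiv.Perm (Fin (2 * (m + 1)))}
    (h : IsMatchingForm σ) : σ ⟨0, by omega⟩ = ⟨0, by omega⟩ := by
  obtain ⟨x, hx⟩ := σ.surjective ⟨0, by omega⟩
  obtain ⟨x, hxlt⟩ := x
  obtain ⟨i, hi | hi⟩ := x.even_or_odd'
  · subst hi
    rcases Nat.eq_zero_or_pos i with rfl | hpos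
    · exact hx
    · have := h.2 ⟨0, by omega⟩ ⟨i, by omega⟩ hpos
      rw [hx] at this
      exact absurd this (by simp)
  · subst hi
    have := h.1 ⟨i, by omega⟩
    rw [hx] at this
    exact absurd this (by simp)

theorem isMatchingForm_permInsertPair {m : ℕ} (k : Fin (2 * m + 1))
    (τ : Equiv.Perm (Fin (2 * m))) :
    IsMatchingForm (m := m + 1) (permInsertPair k τ) ↔ IsMatchingForm τ := by
  have h0 : permInsertPair k τ ⟨0, by omega⟩ = 0 := permInsertPair_zero k τ
  have h1 : permInsertPair k τ ⟨1, by omega⟩ = k.succ := permInsertPair_one k τ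
  have h2 : ∀ (j : ℕ) (hj : j < 2 * m), permInsertPair k τ ⟨j + 2, by omega⟩ =
      (k.succAbove (τ ⟨j, hj⟩)).succ := fun j hj => permInsertPair_succ_succ k τ ⟨j, hj⟩
  have hlt : ∀ a b : Fin (2 * m), (k.succAbove a).succ < (k.succAbove b).succ ↔ a < b := by
    intro a b
    rw [Fin.succ_lt_succ_iff]
    exact (Fin.strictMono_succAbove k).lt_iff_lt
  constructor
  · rintro ⟨ha, hb⟩
    refine ⟨fun i => ?_, fun i j hij => ?_⟩
    · have := ha i.succ
      have e1 := h2 (2 * i) (by omega)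
      have e2 := h2 (2 * i + 1) (by omega)
      rw [← hlt, ← e1, ← e2]
      exact this
    · have := hb i.succ j.succ (Fin.succ_lt_succ_iff.2 hij)
      have e1 := h2 (2 * i) (by omega)
      have e2 := h2 (2 * j) (by omega)
      rw [← hlt, ← e1, ← e2]
      exact this
  · rintro ⟨ha, hb⟩
    refine ⟨fun i => ?_, fun i j hij => ?_⟩
    · induction i using Fin.cases with
      | zero =>
        change permInsertPair k τ ⟨0, _⟩ < permInsertPair k τ ⟨1, _⟩
        rw [h0, h1]
        exact Fin.succ_pos k
      | succ i =>
        have := ha i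
        rw [← hlt, ← h2 (2 * i) (by omega), ← h2 (2 * i + 1) (by omega)] at this
        exact this
    · induction j using Fin.cases with
      | zero => exact absurd hij (Fin.not_lt_zero i)
      | succ j =>
        induction i using Fin.cases with
        | zero =>
          change permInsertPair k τ ⟨0, _⟩ < permInsertPair k τ ⟨2 * j + 2, _⟩
          rw [h0, h2 (2 * j) (by omega)]
          exact Fin.succ_pos _
        | succ i =>
          have := hb i j (Fin.succ_lt_succ_iff.1 hij)
          rw [← hlt, ← h2 (2 * i) (by omega), ← h2 (2 * j) (by omega)] at this
          exact this

/-- Laplace-type expansion of the Pfaffian along the first row. -/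
theorem pfaffian_succ {R : Type*} [CommRing R] {m : ℕ}
    (A : Matrix (Fin (2 * m + 2)) (Fin (2 * m + 2)) R) :
    pfaffian (m := m + 1) A = ∑ k : Fin (2 * m + 1), (-1) ^ (k : ℕ) *
      (A 0 k.succ * pfaffian (Matrix.of fun i j : Fin (2 * m) =>
        A (k.succAbove i).succ (k.succAbove j).succ)) := by
  unfold pfaffian
  simp_rw [Finset.mul_sum]
  rw [← Finset.sum_product' (s := Finset.univ)]
  symm
  refine Finset.sum_bij (fun x _ => permInsertPair x.1 x.2) ?_ ?_ ?_ ?_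
  · rintro ⟨k, τ⟩ h
    rw [Finset.mem_product, Finset.mem_filter] at h
    exact Finset.mem_filter.2 ⟨Finset.mem_univ _, (isMatchingForm_permInsertPair k τ).2 h.2.2⟩
  · rintro ⟨k, τ⟩ _ ⟨k', τ'⟩ _ h
    dsimp only at h
    obtain rfl : k = k' := by
      have := congrArg (fun f => f (Fin.succ 0)) h
      simpa only [permInsertPair_one, Fin.succ_inj] using this
    congr 1
    ext j : 1
    have := congrArg (fun f => f j.succ.succ) h
    simpa only [permInsertPair_succ_succ, Fin.succ_inj, Fin.succAbove_right_inj] using this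
  · intro σ hσ
    have hσ' : IsMatchingForm (m := m + 1) σ := (Finset.mem_filter.1 hσ).2
    obtain ⟨k, τ, rfl⟩ := exists_permInsertPair (N := 2 * m) σ hσ'.apply_zero
    refine ⟨⟨k, τ⟩, Finset.mem_product.2 ⟨Finset.mem_univ _, Finset.mem_filter.2
      ⟨Finset.mem_univ _, (isMatchingForm_permInsertPair k τ).1 hσ'⟩⟩, rfl⟩
  · rintro ⟨k, τ⟩ _
    dsimp only
    have key : ∏ i : Fin (m + 1), A (permInsertPair k τ ⟨2 * (i : ℕ), by omega⟩)
        (permInsertPair k τ ⟨2 * (i : ℕ) + 1, by omega⟩) = A 0 k.succ *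
        ∏ i : Fin m, A (k.succAbove (τ ⟨2 * (i : ℕ), by omega⟩)).succ
          (k.succAbove (τ ⟨2 * (i : ℕ) + 1, by omega⟩)).succ := by
      rw [Fin.prod_univ_succ]
      have h0 : permInsertPair k τ ⟨0, by omega⟩ = 0 := permInsertPair_zero k τ
      have h1 : permInsertPair k τ ⟨1, by omega⟩ = k.succ := permInsertPair_one k τ
      congr 1
      · exact congrArg₂ A h0 h1
      · refine Finset.prod_congr rfl fun i _ => ?_
        exact congrArg₂ A (permInsertPair_succ_succ k τ ⟨2 * i, by omega⟩)
          (permInsertPair_succ_succ k τ ⟨2 * i + 1, by omega⟩)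
    have hs := sign_permInsertPair k τ
    refine Eq.trans ?_ (congrArg₂ (fun (x : ℤ) (y : R) => x • y) hs key).symm
    simp only [Matrix.of_apply, zsmul_eq_mul]
    push_cast
    ring

section PfaffianFunctional

variable {R M : Type*} [CommRing R] [AddCommGroup M] [Module R M]

open ExteriorAlgebra CliffordAlgebra

/-- The product of a list of vectors in the exterior algebra. -/
noncomputable def extProd (l : List M) : ExteriorAlgebra R M :=
  (l.map (ExteriorAlgebra.ι R)).prod

theorem extProd_nil : extProd (R := R) ([] : List M) = 1 := rfl

theorem extProd_cons (v : M) (l : List M) :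
    extProd (R := R) (v :: l) = ExteriorAlgebra.ι R v * extProd l := by
  simp [extProd]

theorem extProd_append (l l' : List M) :
    extProd (R := R) (l ++ l') = extProd l * extProd l' := by
  simp [extProd]

theorem extProd_mul_ι (l : List M) (v : M) :
    extProd (R := R) l * ExteriorAlgebra.ι R v =
      (-1 : R) ^ l.length • (ExteriorAlgebra.ι R v * extProd l) := by
  induction l with
  | nil => simp [extProd]
  | cons x l ih =>
    have h : ExteriorAlgebra.ι R x * ExteriorAlgebra.ι R v =
        -(ExteriorAlgebra.ι R v * ExteriorAlgebra.ι R x) :=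
      eq_neg_of_add_eq_zero_left (ExteriorAlgebra.ι_add_mul_swap x v)
    rw [extProd_cons, mul_assoc, ih, mul_smul_comm, ← mul_assoc, h, List.length_cons, pow_succ]
    simp [mul_assoc]

/-- Contraction of an exterior product by a linear form. -/
noncomputable def extContract (d : Module.Dual R M) :
    ExteriorAlgebra R M →ₗ[R] ExteriorAlgebra R M :=
  CliffordAlgebra.contractLeft (Q := (0 : QuadraticForm R M)) d

theorem extContract_ι_mul (d : Module.Dual R M) (v : M) (x : ExteriorAlgebra R M) :
    extContract d (ExteriorAlgebra.ι R v * x) =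
      d v • x - ExteriorAlgebra.ι R v * extContract d x :=
  CliffordAlgebra.contractLeft_ι_mul (Q := (0 : QuadraticForm R M)) d v x

theorem extContract_one (d : Module.Dual R M) : extContract d 1 = 0 :=
  CliffordAlgebra.contractLeft_one (0 : QuadraticForm R M) d

theorem extContract_comm (d d' : Module.Dual R M) (x : ExteriorAlgebra R M) :
    extContract d (extContract d' x) = -extContract d' (extContract d x) :=
  CliffordAlgebra.contractLeft_comm (Q := (0 : QuadraticForm R M)) d d' x

theorem extContract_extProd (d : Module.Dual R M) (l : List M) :
    extContract d (extProd l) = ∑ k : Fin l.length,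
      (-1 : R) ^ (k : ℕ) • d (l.get k) • extProd (l.eraseIdx k) := by
  induction l with
  | nil => simp [extProd, extContract_one]
  | cons x l ih =>
    rw [extProd_cons, extContract_ι_mul, ih]
    simp only [List.length_cons]
    rw [Fin.sum_univ_succ, Finset.mul_sum, sub_eq_add_neg, ← Finset.sum_neg_distrib]
    congr 1
    · simp
    · refine Finset.sum_congr rfl fun k _ => ?_
      simp [extProd_cons, pow_succ]

theorem extContract_extProd_eq_zero (d : Module.Dual R M) (l : List M) (h : ∀ v ∈ l, d v = 0) :
    extContract d (extProd l) = 0 := by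
  rw [extContract_extProd]
  refine Finset.sum_eq_zero fun k _ => ?_
  rw [h _ (List.get_mem l k)]
  simp

theorem extContract_extProd_append (d : Module.Dual R M) (l : List M) (h : ∀ v ∈ l, d v = 0)
    (v : M) : extContract d (extProd (l ++ [v])) = ((-1) ^ l.length * d v) • extProd l := by
  induction l with
  | nil =>
    rw [List.nil_append, extProd_cons, extContract_ι_mul, extProd_nil, extContract_one]
    simp
  | cons x l ih =>
    rw [List.cons_append, extProd_cons, extContract_ι_mul, h x (by simp),
      ih fun y hy => h y (by simp [hy]), extProd_cons]
    simp [pow_succ]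

theorem toQuadraticMap_neg_of_self_eq_zero (B : LinearMap.BilinForm R M) (hB : ∀ v, B v v = 0) :
    LinearMap.BilinMap.toQuadraticMap (-B) = (0 : QuadraticForm R M) - 0 := by
  ext v
  simp [hB]

/-- The linear functional on the exterior algebra sending `v₁ ∧ ⋯ ∧ v_N` to the Pfaffian of the
alternating matrix `(B vᵢ vⱼ)`. -/
noncomputable def pfFunctional (B : LinearMap.BilinForm R M) (hB : ∀ v, B v v = 0) :
    ExteriorAlgebra R M →ₗ[R] R :=
  ExteriorAlgebra.algebraMapInv.toLinearMap ∘ₗ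
    CliffordAlgebra.changeForm (toQuadraticMap_neg_of_self_eq_zero B hB)

variable (B : LinearMap.BilinForm R M) (hB : ∀ v, B v v = 0)

theorem pfFunctional_one : pfFunctional B hB 1 = 1 := by
  rw [pfFunctional, LinearMap.comp_apply]
  erw [CliffordAlgebra.changeForm_one]
  simp

theorem pfFunctional_ι_mul (v : M) (x : ExteriorAlgebra R M) :
    pfFunctional B hB (ExteriorAlgebra.ι R v * x) = pfFunctional B hB (extContract (B v) x) := by
  rw [pfFunctional, LinearMap.comp_apply, LinearMap.comp_apply]
  erw [CliffordAlgebra.changeForm_ι_mul, CliffordAlgebra.changeForm_contractLeft]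
  rw [map_sub]
  have : ExteriorAlgebra.algebraMapInv.toLinearMap (CliffordAlgebra.ι 0 v *
      (CliffordAlgebra.changeForm (toQuadraticMap_neg_of_self_eq_zero B hB)) x :
        ExteriorAlgebra R M) = 0 := by
    change ExteriorAlgebra.algebraMapInv (ExteriorAlgebra.ι R v * _) = 0
    rw [map_mul]
    simp [ExteriorAlgebra.algebraMapInv]
  erw [this]
  simp

theorem pfFunctional_cons (v : M) (l : List M) :
    pfFunctional B hB (extProd (v :: l)) = ∑ k : Fin l.length,
      (-1 : R) ^ (k : ℕ) * (B v (l.get k) * pfFunctional B hB (extProd (l.eraseIdx k))) := by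
  rw [extProd_cons, pfFunctional_ι_mul, extContract_extProd, map_sum]
  simp

theorem pfFunctional_unpaired (w : M) (l l' : List M) (h : ∀ v ∈ l, B w v = 0)
    (h' : ∀ v ∈ l', B w v = 0) : pfFunctional B hB (extProd (l ++ w :: l')) = 0 := by
  rw [extProd_append, extProd_cons, ← mul_assoc, extProd_mul_ι, smul_mul_assoc, map_smul,
    mul_assoc, pfFunctional_ι_mul, ← extProd_append, extContract_extProd_eq_zero, map_zero,
    smul_zero]
  intro v hv
  rcases List.mem_append.1 hv with hv | hv
  exacts [h v hv, h' v hv]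

theorem pfFunctional_pair (u w : M) (l l' : List M) (h : ∀ v ∈ l, B w v = 0)
    (h' : ∀ v ∈ l', B w v = 0) : pfFunctional B hB (extProd (l ++ u :: w :: l')) =
      B u w * pfFunctional B hB (extProd (l ++ l')) := by
  have hz : extContract (B w) (extProd (l ++ l')) = 0 := by
    refine extContract_extProd_eq_zero _ _ fun v hv => ?_
    rcases List.mem_append.1 hv with hv | hv
    exacts [h v hv, h' v hv]
  have hmove : extProd (R := R) (l ++ u :: w :: l') = extProd (u :: w :: (l ++ l')) := by
    simp only [extProd_append, extProd_cons]
    rw [← mul_assoc, extProd_mul_ι, smul_mul_assoc, mul_assoc, ← mul_assoc (extProd l),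
      extProd_mul_ι, smul_mul_assoc, mul_smul_comm, smul_smul, ← pow_add, ← two_mul, mul_assoc]
    simp
  rw [hmove, extProd_cons, pfFunctional_ι_mul, extProd_cons, extContract_ι_mul, map_sub,
    pfFunctional_ι_mul, extContract_comm, hz]
  simp

theorem pfFunctional_congr {M' : Type*} [AddCommGroup M'] [Module R M']
    (B' : LinearMap.BilinForm R M') (hB' : ∀ v, B' v v = 0) {I : Type*} (u : I → M) (u' : I → M')
    (s : List I) (h : s.Pairwise fun i j => B (u i) (u j) = B' (u' i) (u' j)) :
    pfFunctional B hB (extProd (s.map u)) = pfFunctional B' hB' (extProd (s.map u')) := by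
  induction hn : s.length using Nat.strong_induction_on generalizing s with
  | _ n ih =>
    cases s with
    | nil => simp [extProd_nil, pfFunctional_one]
    | cons i s =>
      rw [List.map_cons, List.map_cons, pfFunctional_cons, pfFunctional_cons]
      rw [List.pairwise_cons] at h
      refine Fintype.sum_equiv (finCongr (by simp)) _ _ fun k => ?_
      have hk : (k : ℕ) < s.length := by simpa using k.2
      have hlen : (s.eraseIdx k).length < n := by
        rw [List.length_eraseIdx_of_lt hk, ← hn, List.length_cons]
        omega
      have := ih _ hlen (s.eraseIdx k) (h.2.sublist (List.eraseIdx_sublist _ _)) rfl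
      simp only [List.get_eq_getElem, List.getElem_map, List.eraseIdx_map, finCongr_apply,
        Fin.val_cast, this]
      rw [h.1 _ (List.getElem_mem hk)]

theorem pfaffian_eq_pfFunctional {m : ℕ} (v : Fin (2 * m) → M) :
    pfaffian (Matrix.of fun i j => B (v i) (v j)) =
      pfFunctional B hB (extProd (List.ofFn v)) := by
  induction m with
  | zero => simp [pfaffian_zero, extProd_nil, pfFunctional_one]
  | succ m ih =>
    rw [pfaffian_succ]
    have hv : List.ofFn v = v (0 : Fin (2 * m + 2)) ::
        List.ofFn fun i : Fin (2 * m + 1) => v i.succ := List.ofFn_succ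
    rw [hv, pfFunctional_cons]
    refine Fintype.sum_equiv (finCongr (by simp)) _ _ fun k => ?_
    have herase : (List.ofFn fun i : Fin (2 * m + 1) => v i.succ).eraseIdx k =
        List.ofFn fun i : Fin (2 * m) => v (k.succAbove i).succ := by
      apply List.ext_getElem
      · rw [List.length_eraseIdx_of_lt (by simp; omega)]
        simp
      · intro i h1 h2
        have hi : i < 2 * m := by simpa using h2
        rw [List.getElem_eraseIdx]
        split_ifs with hik
        · simp only [List.getElem_ofFn]
          congr 2
          rw [Fin.succAbove_of_castSucc_lt _ _ (by simpa [Fin.lt_def] using hik)]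
          rfl
        · simp only [List.getElem_ofFn]
          congr 2
          rw [Fin.succAbove_of_le_castSucc _ _ (by simpa [Fin.le_def] using hik)]
          rfl
    have hI := ih fun i => v (k.succAbove i).succ
    simp only [Matrix.of_apply] at hI ⊢
    rw [hI, ← herase, List.get_ofFn]
    simp

end PfaffianFunctional

section Levels

/-- Compatibility of entries in horizontally adjacent boxes. -/
def RowCompat {n : ℕ} (e f : Fin n × Bool) : Prop :=
  ordE e ≤ ordE f ∧ ¬(e = f ∧ e.2 = true)

/-- Compatibility of entries in vertically adjacent boxes. -/
def ColCompat {n : ℕ} (e f : Fin n × Bool) : Prop :=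
  ordE e ≤ ordE f ∧ ¬(e = f ∧ e.2 = false)

/-- The box `q` is immediately to the right of `p`. -/
def RightOf (p q : ℕ × ℕ) : Prop := q.1 = p.1 ∧ q.2 = p.2 + 1

/-- The box `q` is immediately below `p`. -/
def Below (p q : ℕ × ℕ) : Prop := q.1 = p.1 + 1 ∧ q.2 = p.2

/-- Primed shifted tableaux on a set of boxes. -/
def IsPrimedTableau {n : ℕ} {C : Finset (ℕ × ℕ)} (T : {p // p ∈ C} → Fin n × Bool) : Prop :=
  (∀ p q : {p // p ∈ C}, RightOf p q → RowCompat (T p) (T q)) ∧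
    ∀ p q : {p // p ∈ C}, Below p q → ColCompat (T p) (T q)

/-- The weight of a box with a given entry. -/
def entryWeight {R : Type*} {n : ℕ} (X Y : Fin n → ℤ → R) (p : ℕ × ℕ) (e : Fin n × Bool) : R :=
  if e.2 then Y e.1 (content p) else X e.1 (content p)

theorem QGen_eq {R : Type*} [CommRing R] (n : ℕ) (C : Finset (ℕ × ℕ)) (X Y : Fin n → ℤ → R) :
    QGen n C X Y = ∑ T ∈ Finset.univ.filter (fun T : {p // p ∈ C} → Fin n × Bool =>
      IsPrimedTableau T), ∏ p : {p // p ∈ C}, entryWeight X Y p (T p) := by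
  unfold QGen
  refine Finset.sum_congr ?_ fun _ _ => rfl
  ext T
  rw [Finset.mem_filter, Finset.mem_filter]
  rfl

/-- An entry of the smaller alphabet, viewed in the larger one. -/
def entryCastSucc {n : ℕ} (e : Fin n × Bool) : Fin (n + 1) × Bool := (e.1.castSucc, e.2)

theorem entryCastSucc_injective {n : ℕ} : Function.Injective (entryCastSucc (n := n)) := by
  rintro ⟨a, b⟩ ⟨c, d⟩ h
  simpa [entryCastSucc] using h

theorem rowCompat_castSucc {n : ℕ} (e f : Fin n × Bool) :
    RowCompat (entryCastSucc e) (entryCastSucc f) ↔ RowCompat e f := by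
  unfold RowCompat
  rw [entryCastSucc_injective.eq_iff]
  rfl

theorem colCompat_castSucc {n : ℕ} (e f : Fin n × Bool) :
    ColCompat (entryCastSucc e) (entryCastSucc f) ↔ ColCompat e f := by
  unfold ColCompat
  rw [entryCastSucc_injective.eq_iff]
  rfl

theorem ordE_castSucc_lt_last {n : ℕ} (e : Fin n × Bool) (b : Bool) :
    ordE (entryCastSucc e) < ordE (Fin.last n, b) := by
  obtain ⟨a, c⟩ := e
  have := a.2
  cases b <;> cases c <;> (simp [ordE, entryCastSucc]; try omega)

theorem rowCompat_castSucc_last {n : ℕ} (e : Fin n × Bool) (b : Bool) :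
    RowCompat (entryCastSucc e) (Fin.last n, b) :=
  ⟨(ordE_castSucc_lt_last e b).le, fun h => (ordE_castSucc_lt_last e b).ne (congrArg _ h.1)⟩

theorem colCompat_castSucc_last {n : ℕ} (e : Fin n × Bool) (b : Bool) :
    ColCompat (entryCastSucc e) (Fin.last n, b) :=
  ⟨(ordE_castSucc_lt_last e b).le, fun h => (ordE_castSucc_lt_last e b).ne (congrArg _ h.1)⟩

theorem rowCompat_last_last {n : ℕ} (b b' : Bool) :
    RowCompat (Fin.last n, b) (Fin.last n, b') ↔ b' = false := by
  cases b <;> cases b' <;> simp [RowCompat, ordE]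

theorem colCompat_last_last {n : ℕ} (b b' : Bool) :
    ColCompat (Fin.last n, b) (Fin.last n, b') ↔ b = true := by
  cases b <;> cases b' <;> simp [ColCompat, ordE]

/-- `D` is closed under moving left or up inside `C`. -/
def IsLowerIn (C D : Finset (ℕ × ℕ)) : Prop :=
  ∀ p ∈ C, ∀ q ∈ D, RightOf p q ∨ Below p q → p ∈ D

/-- Combine a tableau on `D` with primed/unprimed largest entries on the rest of `C`. -/
def glueTableau {n : ℕ} {C D : Finset (ℕ × ℕ)} (T : {p // p ∈ D} → Fin n × Bool)
    (U : {p // p ∈ C \ D} → Bool) (p : {p // p ∈ C}) : Fin (n + 1) × Bool :=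
  if h : (p : ℕ × ℕ) ∈ D then entryCastSucc (T ⟨p, h⟩)
  else (Fin.last n, U ⟨p, Finset.mem_sdiff.2 ⟨p.2, h⟩⟩)

/-- The admissible primed/unprimed fillings of a set of boxes by a single letter. -/
def IsStripFilling {S : Finset (ℕ × ℕ)} (U : {p // p ∈ S} → Bool) : Prop :=
  (∀ p q : {p // p ∈ S}, RightOf p q → U q = false) ∧
    ∀ p q : {p // p ∈ S}, Below p q → U p = true

theorem isPrimedTableau_glue {n : ℕ} {C D : Finset (ℕ × ℕ)} (hDC : D ⊆ C) (hD : IsLowerIn C D)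
    (T : {p // p ∈ D} → Fin n × Bool) (U : {p // p ∈ C \ D} → Bool) :
    IsPrimedTableau (C := C) (glueTableau T U) ↔ IsPrimedTableau T ∧ IsStripFilling U := by
  constructor
  · rintro ⟨h1, h2⟩
    refine ⟨⟨fun p q hpq => ?_, fun p q hpq => ?_⟩, fun p q hpq => ?_, fun p q hpq => ?_⟩
    · have := h1 ⟨p, hDC p.2⟩ ⟨q, hDC q.2⟩ hpq
      simpa [glueTableau, p.2, q.2, rowCompat_castSucc] using this
    · have := h2 ⟨p, hDC p.2⟩ ⟨q, hDC q.2⟩ hpq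
      simpa [glueTableau, p.2, q.2, colCompat_castSucc] using this
    · have hp := Finset.mem_sdiff.1 p.2
      have hq := Finset.mem_sdiff.1 q.2
      have := h1 ⟨p, hp.1⟩ ⟨q, hq.1⟩ hpq
      simpa [glueTableau, hp.2, hq.2, rowCompat_last_last] using this
    · have hp := Finset.mem_sdiff.1 p.2
      have hq := Finset.mem_sdiff.1 q.2
      have := h2 ⟨p, hp.1⟩ ⟨q, hq.1⟩ hpq
      simpa [glueTableau, hp.2, hq.2, colCompat_last_last] using this
  · rintro ⟨⟨h1, h2⟩, h3, h4⟩
    refine ⟨fun p q hpq => ?_, fun p q hpq => ?_⟩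
    · by_cases hq : (q : ℕ × ℕ) ∈ D
      · have hp := hD p p.2 q hq (Or.inl hpq)
        have := h1 ⟨p, hp⟩ ⟨q, hq⟩ hpq
        simpa [glueTableau, hp, hq, rowCompat_castSucc] using this
      · by_cases hp : (p : ℕ × ℕ) ∈ D
        · simpa [glueTableau, hp, hq] using rowCompat_castSucc_last _ _
        · have := h3 ⟨p, Finset.mem_sdiff.2 ⟨p.2, hp⟩⟩ ⟨q, Finset.mem_sdiff.2 ⟨q.2, hq⟩⟩ hpq
          simpa [glueTableau, hp, hq, rowCompat_last_last] using this
    · by_cases hq : (q : ℕ × ℕ) ∈ D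
      · have hp := hD p p.2 q hq (Or.inr hpq)
        have := h2 ⟨p, hp⟩ ⟨q, hq⟩ hpq
        simpa [glueTableau, hp, hq, colCompat_castSucc] using this
      · by_cases hp : (p : ℕ × ℕ) ∈ D
        · simpa [glueTableau, hp, hq] using colCompat_castSucc_last _ _
        · have := h4 ⟨p, Finset.mem_sdiff.2 ⟨p.2, hp⟩⟩ ⟨q, Finset.mem_sdiff.2 ⟨q.2, hq⟩⟩ hpq
          simpa [glueTableau, hp, hq, colCompat_last_last] using this

/-- The boxes whose entry is not the largest letter. -/
def lowerPart {n : ℕ} {C : Finset (ℕ × ℕ)} (T : {p // p ∈ C} → Fin (n + 1) × Bool) :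
    Finset (ℕ × ℕ) :=
  (Finset.univ.filter fun p => (T p).1 ≠ Fin.last n).map (Function.Embedding.subtype _)

theorem mem_lowerPart {n : ℕ} {C : Finset (ℕ × ℕ)} (T : {p // p ∈ C} → Fin (n + 1) × Bool)
    (p : {p // p ∈ C}) : (p : ℕ × ℕ) ∈ lowerPart T ↔ (T p).1 ≠ Fin.last n := by
  simp [lowerPart]

theorem lowerPart_subset {n : ℕ} {C : Finset (ℕ × ℕ)} (T : {p // p ∈ C} → Fin (n + 1) × Bool) :
    lowerPart T ⊆ C := by
  intro p hp
  simp only [lowerPart, Finset.mem_map] at hp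
  obtain ⟨a, -, rfl⟩ := hp
  exact a.2

theorem exists_glueTableau {n : ℕ} {C : Finset (ℕ × ℕ)} (T : {p // p ∈ C} → Fin (n + 1) × Bool) :
    ∃ (T₁ : {p // p ∈ lowerPart T} → Fin n × Bool) (U : {p // p ∈ C \ lowerPart T} → Bool),
      glueTableau T₁ U = T := by
  refine ⟨fun p => ((T ⟨p, lowerPart_subset T p.2⟩).1.castPred
    ((mem_lowerPart T ⟨p, lowerPart_subset T p.2⟩).1 p.2), (T ⟨p, lowerPart_subset T p.2⟩).2),
    fun p => (T ⟨p, (Finset.mem_sdiff.1 p.2).1⟩).2, ?_⟩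
  funext p
  unfold glueTableau
  split_ifs with h
  · simp [entryCastSucc]
  · rw [mem_lowerPart, not_not] at h
    rw [← h]

theorem lowerPart_glueTableau {n : ℕ} {C D : Finset (ℕ × ℕ)} (hDC : D ⊆ C)
    (T : {p // p ∈ D} → Fin n × Bool) (U : {p // p ∈ C \ D} → Bool) :
    lowerPart (C := C) (glueTableau T U) = D := by
  ext p
  constructor
  · intro hp
    have hpC := lowerPart_subset _ hp
    rw [mem_lowerPart _ ⟨p, hpC⟩] at hp
    by_contra h
    exact hp (by simp [glueTableau, h])
  · intro hp
    rw [mem_lowerPart _ ⟨p, hDC hp⟩]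
    simp [glueTableau, hp, entryCastSucc, Fin.castSucc_ne_last]

theorem isLowerIn_lowerPart {n : ℕ} {C : Finset (ℕ × ℕ)}
    {T : {p // p ∈ C} → Fin (n + 1) × Bool} (hT : IsPrimedTableau T) :
    IsLowerIn C (lowerPart T) := by
  intro p hp q hq hpq
  have hqC := lowerPart_subset T hq
  rw [mem_lowerPart T ⟨q, hqC⟩] at hq
  rw [mem_lowerPart T ⟨p, hp⟩]
  have hle : ordE (T ⟨p, hp⟩) ≤ ordE (T ⟨q, hqC⟩) := by
    rcases hpq with h | h
    · exact (hT.1 ⟨p, hp⟩ ⟨q, hqC⟩ h).1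
    · exact (hT.2 ⟨p, hp⟩ ⟨q, hqC⟩ h).1
  intro hlast
  have hlt : ((T ⟨q, hqC⟩).1 : ℕ) < n := Fin.val_lt_last hq
  simp only [ordE, hlast, Fin.val_last] at hle
  split_ifs at hle <;> omega

variable {R : Type*} [CommRing R]

/-- The total weight of the entries admissible in the box `p` of a strip `S` filled by one letter:
the entry is unprimed if there is a box of `S` to the left, primed if there is one below. -/
noncomputable def stripWeight (S : Finset (ℕ × ℕ)) (x y : ℤ → R) (p : ℕ × ℕ) : R :=
  (if ∃ q ∈ S, Below p q then 0 else x (content p)) +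
    (if ∃ q ∈ S, RightOf q p then 0 else y (content p))

theorem sum_isStripFilling (S : Finset (ℕ × ℕ)) (x y : ℤ → R) :
    ∑ U ∈ Finset.univ.filter (fun U : {p // p ∈ S} → Bool => IsStripFilling U),
      ∏ p : {p // p ∈ S}, (if U p then y (content p) else x (content p)) =
    ∏ p ∈ S, stripWeight S x y p := by
  rw [← Finset.prod_coe_sort S]
  have h : ∀ p : {p // p ∈ S}, stripWeight S x y p =
      ∑ b ∈ (Finset.univ : Finset Bool).filter (fun b =>
        ((∃ q ∈ S, RightOf q p) → b = false) ∧ ((∃ q ∈ S, Below p q) → b = true)),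
        (if b then y (content p) else x (content p)) := by
    intro p
    rw [Finset.sum_filter, Fintype.sum_bool, stripWeight]
    by_cases h1 : ∃ q ∈ S, RightOf q p <;> by_cases h2 : ∃ q ∈ S, Below p q <;>
      simp [h1, h2, add_comm]
  rw [Finset.prod_congr rfl fun p _ => h p, Finset.prod_univ_sum]
  refine Finset.sum_congr ?_ fun _ _ => rfl
  ext U
  rw [Finset.mem_filter, Fintype.mem_piFinset]
  simp only [Finset.mem_filter, Finset.mem_univ, true_and, IsStripFilling]
  constructor
  · rintro ⟨h1, h2⟩ p
    exact ⟨fun ⟨q, hq, hqp⟩ => h1 ⟨q, hq⟩ p hqp, fun ⟨q, hq, hqp⟩ => h2 p ⟨q, hq⟩ hqp⟩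
  · intro h
    exact ⟨fun p q hpq => (h q).1 ⟨p, p.2, hpq⟩, fun p q hpq => (h p).2 ⟨q, q.2, hpq⟩⟩

theorem prod_glueTableau {n : ℕ} {C D : Finset (ℕ × ℕ)} (hDC : D ⊆ C) (X Y : Fin (n + 1) → ℤ → R)
    (T : {p // p ∈ D} → Fin n × Bool) (U : {p // p ∈ C \ D} → Bool) :
    ∏ p : {p // p ∈ C}, entryWeight X Y p (glueTableau (C := C) T U p) =
      (∏ p : {p // p ∈ D}, entryWeight (fun k => X k.castSucc) (fun k => Y k.castSucc) p (T p)) *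
        ∏ p : {p // p ∈ C \ D},
          (if U p then Y (Fin.last n) (content p) else X (Fin.last n) (content p)) := by
  rw [← Fintype.prod_sumElim]
  symm
  let e : {p // p ∈ D} ⊕ {p // p ∈ C \ D} ≃ {p // p ∈ C} :=
    { toFun := Sum.elim (fun p => ⟨p, hDC p.2⟩) fun p => ⟨p, (Finset.mem_sdiff.1 p.2).1⟩
      invFun := fun p => if h : (p : ℕ × ℕ) ∈ D then Sum.inl ⟨p, h⟩
        else Sum.inr ⟨p, Finset.mem_sdiff.2 ⟨p.2, h⟩⟩
      left_inv := by
        rintro (p | p)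
        · simp
        · have := (Finset.mem_sdiff.1 p.2).2
          simp [this]
      right_inv := by
        intro p
        dsimp only
        split_ifs <;> rfl }
  refine Fintype.prod_equiv e _ _ ?_
  rintro (p | p)
  · simp [e, glueTableau, entryWeight, entryCastSucc]
  · have := (Finset.mem_sdiff.1 p.2).2
    simp [e, glueTableau, entryWeight, this]

/-- Splitting off the boxes filled by the largest letter. -/
theorem QGen_succ (n : ℕ) (C : Finset (ℕ × ℕ)) (X Y : Fin (n + 1) → ℤ → R) :
    QGen (n + 1) C X Y = ∑ D ∈ C.powerset.filter (IsLowerIn C),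
      QGen n D (fun k => X k.castSucc) (fun k => Y k.castSucc) *
        ∏ p ∈ C \ D, stripWeight (C \ D) (X (Fin.last n)) (Y (Fin.last n)) p := by
  rw [QGen_eq, ← Finset.sum_fiberwise_of_maps_to (t := C.powerset.filter (IsLowerIn C))
    (g := lowerPart)]
  · refine Finset.sum_congr rfl fun D hD => ?_
    rw [Finset.mem_filter, Finset.mem_powerset] at hD
    obtain ⟨hDC, hD⟩ := hD
    rw [QGen_eq, ← sum_isStripFilling, Finset.sum_mul_sum, ← Finset.sum_product']
    symm
    refine Finset.sum_bij (fun x _ => glueTableau x.1 x.2) ?_ ?_ ?_ ?_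
    · rintro ⟨T, U⟩ h
      simp only [Finset.mem_product, Finset.mem_filter, Finset.mem_univ, true_and] at h ⊢
      exact ⟨(isPrimedTableau_glue hDC hD T U).2 h, lowerPart_glueTableau hDC T U⟩
    · rintro ⟨T, U⟩ _ ⟨T', U'⟩ _ h
      dsimp only at h
      congr 1
      · funext p
        have := congrFun h ⟨p, hDC p.2⟩
        simp only [glueTableau, p.2, dite_true] at this
        exact entryCastSucc_injective this
      · funext p
        have hp := Finset.mem_sdiff.1 p.2
        have := congrFun h ⟨p, hp.1⟩
        simpa [glueTableau, hp.2] using this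
    · intro T hT
      simp only [Finset.mem_filter, Finset.mem_univ, true_and] at hT
      obtain ⟨hT, rfl⟩ := hT
      obtain ⟨T₁, U, h⟩ := exists_glueTableau T
      refine ⟨⟨T₁, U⟩, ?_, h⟩
      simp only [Finset.mem_product, Finset.mem_filter, Finset.mem_univ, true_and]
      rwa [← isPrimedTableau_glue hDC hD, h]
    · rintro ⟨T, U⟩ _
      exact (prod_glueTableau hDC X Y T U).symm
  · intro T hT
    simp only [Finset.mem_filter, Finset.mem_univ, true_and, Finset.mem_powerset] at hT ⊢
    exact ⟨lowerPart_subset T, isLowerIn_lowerPart hT⟩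

theorem QGen_zero (C : Finset (ℕ × ℕ)) (X Y : Fin 0 → ℤ → R) :
    QGen 0 C X Y = if C = ∅ then 1 else 0 := by
  rw [QGen_eq]
  split_ifs with h
  · subst h
    rw [Finset.filter_true_of_mem fun T _ => ⟨fun p => absurd p.2 (Finset.notMem_empty _),
      fun p => absurd p.2 (Finset.notMem_empty _)⟩]
    simp
  · obtain ⟨p, hp⟩ := Finset.nonempty_iff_ne_empty.2 h
    exact Finset.sum_eq_zero fun T _ => (T ⟨p, hp⟩).1.elim0

theorem QGen_image_add_right (n : ℕ) (C : Finset (ℕ × ℕ)) (b : ℕ) (X Y : Fin n → ℤ → R) :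
    QGen n (C.image fun p => (p.1, p.2 + b)) X Y =
      QGen n C (fun k c => X k (b + c)) (fun k c => Y k (b + c)) := by
  have hinj : Function.Injective fun p : ℕ × ℕ => (p.1, p.2 + b) := by
    rintro ⟨a, c⟩ ⟨a', c'⟩ h
    simpa using h
  let e : {p // p ∈ C} ≃ {p // p ∈ C.image fun p => (p.1, p.2 + b)} :=
    Equiv.ofBijective (fun p => ⟨(p.1.1, p.1.2 + b), Finset.mem_image_of_mem _ p.2⟩)
      ⟨fun p q h => Subtype.ext (hinj (congrArg Subtype.val h)), by
        rintro ⟨q, hq⟩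
        obtain ⟨p, hp, rfl⟩ := Finset.mem_image.1 hq
        exact ⟨⟨p, hp⟩, rfl⟩⟩
  have he1 : ∀ p, (e p : ℕ × ℕ).1 = (p : ℕ × ℕ).1 := fun _ => rfl
  have he2 : ∀ p, (e p : ℕ × ℕ).2 = (p : ℕ × ℕ).2 + b := fun _ => rfl
  rw [QGen_eq, QGen_eq]
  refine Finset.sum_equiv (e.symm.arrowCongr (Equiv.refl _)) ?_ ?_
  · intro T
    have hcol : ∀ c c' : ℕ, c + b = c' + b + 1 ↔ c = c' + 1 := by omega
    rw [Finset.mem_filter, Finset.mem_filter]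
    simp only [Finset.mem_univ, true_and, IsPrimedTableau, RightOf, Below,
      ← e.forall_congr_right (q := fun _ => _), he1, he2, hcol, add_left_inj]
    rfl
  · intro T _
    refine Fintype.prod_equiv e.symm _ _ fun p => ?_
    obtain ⟨p, rfl⟩ := e.surjective p
    have : content (e p) = b + content p := by
      simp only [content, he1, he2]
      push_cast
      ring
    simp [entryWeight, this]

end Levels

section Recursion

theorem mem_shiftedCells {lam mu : ℕ → ℕ} {l : ℕ} (h : ∀ i, i < l → lam i ≤ lam 0)
    (p : ℕ × ℕ) : p ∈ shiftedCells lam mu l ↔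
      p.1 < l ∧ p.1 + mu p.1 ≤ p.2 ∧ p.2 < p.1 + lam p.1 := by
  simp only [shiftedCells, Finset.mem_filter, Finset.mem_product, Finset.mem_range]
  constructor
  · rintro ⟨⟨h1, -⟩, h2, h3⟩
    exact ⟨h1, h2, h3⟩
  · rintro ⟨h1, h2, h3⟩
    have := h _ h1
    exact ⟨⟨h1, by omega⟩, h2, h3⟩

/-- Extension of a finite sequence by zero. -/
def extendZero {p : ℕ} (ν : Fin p → ℕ) (i : ℕ) : ℕ := if h : i < p then ν ⟨i, h⟩ else 0

theorem extendZero_of_lt {p : ℕ} (ν : Fin p → ℕ) (i : Fin p) : extendZero ν i = ν i := by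
  simp [extendZero]

theorem extendZero_of_le {p : ℕ} (ν : Fin p → ℕ) {i : ℕ} (h : p ≤ i) : extendZero ν i = 0 := by
  simp [extendZero, h.not_gt]

variable {R : Type*} [CommRing R]

/-- The weight of the boxes of contents `c, …, a - 1` in a row of length `a` above a row of
length `b`, all filled with one letter. -/
noncomputable def stepCoeff (x y : ℤ → R) (a b c : ℕ) : R :=
  if c = a then 1
  else (if c = b ∧ b ≠ 0 then y c else x c + y c) * ∏ d ∈ Finset.Ioo c a, x d

/-- The sequences `ν` interlacing `lam`. -/
def interlacing (p : ℕ) (lam : ℕ → ℕ) : Finset (Fin p → ℕ) :=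
  Fintype.piFinset fun i : Fin p => Finset.Icc (lam (i + 1)) (lam i)

theorem mem_interlacing {p : ℕ} {lam : ℕ → ℕ} {ν : Fin p → ℕ} :
    ν ∈ interlacing p lam ↔ ∀ i : Fin p, lam (i + 1) ≤ ν i ∧ ν i ≤ lam i := by
  simp [interlacing, Fintype.mem_piFinset]

/-- The rows below `ν` are strictly shorter. -/
def StrictRows {p : ℕ} (ν : Fin p → ℕ) : Prop :=
  ∀ i, i + 1 < p → extendZero ν (i + 1) < extendZero ν i

theorem prod_sdiff_shiftedCells {M : Type*} [CommMonoid M] {p : ℕ} {lam nu mu : ℕ → ℕ}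
    (hlam : ∀ i, i < p → lam i ≤ lam 0) (hnu : ∀ i, i < p → nu i ≤ nu 0)
    (hmn : ∀ i, mu i ≤ nu i) (f : ℕ × ℕ → M) :
    ∏ c ∈ shiftedCells lam mu p \ shiftedCells nu mu p, f c =
      ∏ i : Fin p, ∏ c ∈ Finset.Ico (nu i) (lam i), f (i, i + c) := by
  rw [Finset.prod_sigma']
  refine Finset.prod_bij' (fun c hc => ⟨⟨c.1, ?_⟩, c.2 - c.1⟩)
    (fun s _ => ((s.1 : ℕ), (s.1 : ℕ) + s.2)) ?_ ?_ ?_ ?_ ?_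
  · rw [Finset.mem_sdiff, mem_shiftedCells hlam] at hc
    exact hc.1.1
  · intro c hc
    rw [Finset.mem_sdiff, mem_shiftedCells hlam, mem_shiftedCells hnu] at hc
    simp only [Finset.mem_sigma, Finset.mem_univ, true_and, Finset.mem_Ico]
    omega
  · rintro ⟨i, c⟩ hc
    simp only [Finset.mem_sigma, Finset.mem_univ, true_and, Finset.mem_Ico] at hc
    rw [Finset.mem_sdiff, mem_shiftedCells hlam, mem_shiftedCells hnu]
    have := hmn i
    have := i.2
    dsimp only
    omega
  · intro c hc
    rw [Finset.mem_sdiff, mem_shiftedCells hlam] at hc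
    ext
    · rfl
    · dsimp only
      omega
  · rintro ⟨i, c⟩ _
    simp
  · intro c hc
    rw [Finset.mem_sdiff, mem_shiftedCells hlam] at hc
    congr 1
    ext
    · rfl
    · dsimp only
      omega

theorem prod_stripWeight {p : ℕ} {lam mu : ℕ → ℕ}
    (hlamlen : ∀ i, p ≤ i → lam i = 0) (hlam0 : ∀ i, i < p → lam i ≤ lam 0)
    {ν : Fin p → ℕ} (hν : ν ∈ interlacing p lam) (hstrict : StrictRows ν)
    (hν0 : ∀ i, i < p → extendZero ν i ≤ extendZero ν 0)
    (hmu : ∀ i, mu i ≤ extendZero ν i) (x y : ℤ → R) :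
    ∏ c ∈ shiftedCells lam mu p \ shiftedCells (extendZero ν) mu p,
      stripWeight (shiftedCells lam mu p \ shiftedCells (extendZero ν) mu p) x y c =
    ∏ i : Fin p, stepCoeff x y (lam i) (lam (i + 1)) (ν i) := by
  rw [prod_sdiff_shiftedCells hlam0 hν0 hmu]
  refine Finset.prod_congr rfl fun i _ => ?_
  rw [mem_interlacing] at hν
  have hi := hν i
  have hmem : ∀ c : ℕ × ℕ, c ∈ shiftedCells lam mu p \ shiftedCells (extendZero ν) mu p ↔
      c.1 < p ∧ c.1 + extendZero ν c.1 ≤ c.2 ∧ c.2 < c.1 + lam c.1 := by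
    intro c
    rw [Finset.mem_sdiff, mem_shiftedCells hlam0, mem_shiftedCells hν0]
    have := hmu c.1
    omega
  have hext := extendZero_of_lt ν i
  have hright : ∀ c, ν i ≤ c → c < lam i →
      ((∃ q ∈ shiftedCells lam mu p \ shiftedCells (extendZero ν) mu p,
        RightOf q ((i : ℕ), (i : ℕ) + c)) ↔ ν i < c) := by
    intro c hc hc'
    constructor
    · rintro ⟨⟨a, b⟩, hq, h1, h2⟩
      rw [hmem] at hq
      dsimp only at hq h1 h2
      subst h1
      omega
    · intro h
      refine ⟨((i : ℕ), (i : ℕ) + c - 1), ?_, rfl, ?_⟩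
      · rw [hmem]
        dsimp only
        omega
      · dsimp only
        omega
  have hbelow : ∀ c, ν i ≤ c → c < lam i →
      ((∃ q ∈ shiftedCells lam mu p \ shiftedCells (extendZero ν) mu p,
        Below ((i : ℕ), (i : ℕ) + c) q) ↔ c = lam (i + 1) ∧ lam (i + 1) ≠ 0) := by
    intro c hc hc'
    constructor
    · rintro ⟨⟨a, b⟩, hq, h1, h2⟩
      rw [hmem] at hq
      dsimp only at hq h1 h2
      subst h1
      omega
    · rintro ⟨h, h0⟩
      have hip : (i : ℕ) + 1 < p := by
        by_contra hcon
        exact h0 (hlamlen _ (by omega))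
      refine ⟨((i : ℕ) + 1, (i : ℕ) + c), ?_, rfl, rfl⟩
      rw [hmem]
      dsimp only
      have := hstrict i hip
      omega
  have hcontent : ∀ c : ℕ, content ((i : ℕ), (i : ℕ) + c) = c := by
    intro c
    simp [content]
  rcases eq_or_lt_of_le hi.2 with heq | hlt
  · simp [stepCoeff, heq, hext]
  · rw [hext, ← Finset.Ioo_insert_left hlt, Finset.prod_insert (by simp), stepCoeff, if_neg hlt.ne]
    congr 1
    · rw [stripWeight, if_congr (hright _ le_rfl hlt) rfl rfl,
        if_congr (hbelow _ le_rfl hlt) rfl rfl,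
        hcontent]
      by_cases h : ν i = lam (i + 1) ∧ lam (i + 1) ≠ 0
      · rw [if_pos h, if_pos h]
        simp
      · rw [if_neg h, if_neg h]
        simp
    · refine Finset.prod_congr rfl fun c hc => ?_
      rw [Finset.mem_Ioo] at hc
      rw [stripWeight, if_congr (hright c hc.1.le hc.2) rfl rfl,
        if_congr (hbelow c hc.1.le hc.2) rfl rfl, hcontent, if_pos hc.1, if_neg (by omega)]
      simp

theorem exists_interlacing {p : ℕ} {lam mu : ℕ → ℕ}
    (hlam : ∀ i, i + 1 < p → lam (i + 1) < lam i) (hlampos : ∀ i, i < p → 0 < lam i)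
    (hlamlen : ∀ i, p ≤ i → lam i = 0) (hlam0 : ∀ i, i < p → lam i ≤ lam 0)
    (hmu : ∀ i, mu (i + 1) < mu i ∨ mu (i + 1) = 0) (hsub : ∀ i, mu i ≤ lam i)
    {D : Finset (ℕ × ℕ)} (hD : D ⊆ shiftedCells lam mu p)
    (hlow : IsLowerIn (shiftedCells lam mu p) D)
    (hstrip : ∀ c ∈ shiftedCells lam mu p \ D,
      ¬((∃ q ∈ shiftedCells lam mu p \ D, RightOf q c) ∧
        ∃ q ∈ shiftedCells lam mu p \ D, Below c q)) :
    ∃ ν ∈ interlacing p lam, StrictRows ν ∧ (∀ i, mu i ≤ extendZero ν i) ∧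
      ∀ c : ℕ × ℕ, c ∈ D ↔ c.1 < p ∧ c.1 + mu c.1 ≤ c.2 ∧ c.2 < c.1 + extendZero ν c.1 := by
  have hC := mem_shiftedCells (mu := mu) hlam0
  have hex : ∀ i, ∃ c, mu i ≤ c ∧ (c = lam i ∨ (i, i + c) ∉ D) := fun i =>
    ⟨lam i, hsub i, Or.inl rfl⟩
  let e : ℕ → ℕ := fun i => Nat.find (hex i)
  have he1 : ∀ i, mu i ≤ e i := fun i => (Nat.find_spec (hex i)).1
  have he2 : ∀ i, e i = lam i ∨ (i, i + e i) ∉ D := fun i => (Nat.find_spec (hex i)).2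
  have he3 : ∀ i, e i ≤ lam i := fun i => Nat.find_min' (hex i) ⟨hsub i, Or.inl rfl⟩
  have he4 : ∀ i c, mu i ≤ c → c < e i → (i, i + c) ∈ D := by
    intro i c h1 h2
    have := Nat.find_min (hex i) h2
    by_contra h
    exact this ⟨h1, Or.inr h⟩
  have he5 : ∀ i c, i < p → e i ≤ c → c < lam i → (i, i + c) ∉ D := by
    intro i c hi hc
    induction c, hc using Nat.le_induction with
    | base =>
      intro h
      exact (he2 i).resolve_left h.ne
    | succ c hc ih =>
      intro h hmem
      have := he1 i
      refine ih (by omega) (hlow _ ((hC _).2 ?_) _ hmem (Or.inl ⟨rfl, rfl⟩))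
      dsimp only
      omega
  have hDmem : ∀ i c, (i, i + c) ∈ D ↔ i < p ∧ mu i ≤ c ∧ c < e i := by
    intro i c
    constructor
    · intro h
      have h' := (hC _).1 (hD h)
      dsimp only at h'
      refine ⟨h'.1, by omega, ?_⟩
      by_contra hcon
      exact he5 i c h'.1 (by omega) (by omega) h
    · rintro ⟨h1, h2, h3⟩
      exact he4 i c h2 h3
  have hSmem : ∀ i c, (i, i + c) ∈ shiftedCells lam mu p \ D ↔ i < p ∧ e i ≤ c ∧ c < lam i := by
    intro i c
    rw [Finset.mem_sdiff, hC, hDmem]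
    have := he1 i
    dsimp only
    omega
  have hep : ∀ i, p ≤ i → e i = 0 := fun i hi => by
    have := he3 i
    rw [hlamlen i hi] at this
    omega
  have hext : extendZero (fun i : Fin p => e i) = e := by
    funext i
    unfold extendZero
    split_ifs with h
    · rfl
    · exact (hep i (by omega)).symm
  have hinter : ∀ i, i < p → lam (i + 1) ≤ e i := by
    intro i hi
    by_contra hcon
    have hip : i + 1 < p := by
      by_contra hcon'
      rw [hlamlen (i + 1) (by omega)] at hcon
      omega
    have hl := hlam i hip
    have h1 : (i, i + lam (i + 1)) ∈ shiftedCells lam mu p \ D := (hSmem _ _).2 (by omega)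
    have h2 : (i, i + (lam (i + 1) - 1)) ∈ shiftedCells lam mu p \ D := (hSmem _ _).2 (by omega)
    have hlt : e (i + 1) ≤ lam (i + 1) - 1 := by
      by_contra hcon'
      have hm : mu (i + 1) ≤ lam (i + 1) - 1 := by
        have := hmu i
        have := he1 i
        omega
      have h3 : (i + 1, i + 1 + (lam (i + 1) - 1)) ∈ D := (hDmem _ _).2 (by omega)
      refine (Finset.mem_sdiff.1 h1).2 (hlow _ (Finset.mem_sdiff.1 h1).1 _ h3 (Or.inr ⟨rfl, ?_⟩))
      dsimp only
      omega
    have h3 : (i + 1, i + 1 + (lam (i + 1) - 1)) ∈ shiftedCells lam mu p \ D :=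
      (hSmem _ _).2 (by omega)
    refine hstrip _ h1 ⟨⟨_, h2, rfl, ?_⟩, ⟨_, h3, rfl, ?_⟩⟩ <;> dsimp only <;> omega
  refine ⟨fun i => e i, ?_, ?_, ?_, ?_⟩
  · rw [mem_interlacing]
    exact fun i => ⟨hinter i i.2, he3 i⟩
  · intro i hi
    rw [hext]
    have hl := hlam i hi
    have h1 := hinter i (by omega)
    have h2 := he3 (i + 1)
    by_contra hcon
    have hi1 := he1 i
    by_cases hm : mu (i + 1) = e (i + 1)
    · have := hmu i
      have := hlampos _ hi
      omega
    · have := he1 (i + 1)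
      have h3 : (i + 1, i + 1 + (e (i + 1) - 1)) ∈ D := (hDmem _ _).2 (by omega)
      have h4 : (i, i + e (i + 1)) ∈ D := by
        refine hlow _ ((hC _).2 ?_) _ h3 (Or.inr ⟨rfl, ?_⟩) <;> dsimp only <;> omega
      rw [hDmem] at h4
      omega
  · rw [hext]
    exact he1
  · rintro ⟨i, j⟩
    rw [hext]
    dsimp only
    constructor
    · intro h
      have h' := (hC _).1 (hD h)
      dsimp only at h'
      obtain ⟨c, rfl⟩ := Nat.exists_eq_add_of_le (show i ≤ j by omega)
      rw [hDmem] at h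
      omega
    · rintro ⟨h1, h2, h3⟩
      obtain ⟨c, rfl⟩ := Nat.exists_eq_add_of_le (show i ≤ j by omega)
      rw [hDmem]
      omega

theorem le_zero_of_succ_lt {p : ℕ} {f : ℕ → ℕ} (h : ∀ i, i + 1 < p → f (i + 1) < f i) :
    ∀ i, i < p → f i ≤ f 0 := by
  intro i
  induction i with
  | zero => exact fun _ => le_rfl
  | succ i ih => exact fun hi => (h i hi).le.trans (ih (by omega))

theorem QGen_shiftedCells_succ {n p : ℕ} {lam mu : ℕ → ℕ}
    (hlam : ∀ i, i + 1 < p → lam (i + 1) < lam i) (hlampos : ∀ i, i < p → 0 < lam i)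
    (hlamlen : ∀ i, p ≤ i → lam i = 0)
    (hmu : ∀ i, mu (i + 1) < mu i ∨ mu (i + 1) = 0) (hsub : ∀ i, mu i ≤ lam i)
    (X Y : Fin (n + 1) → ℤ → R) :
    QGen (n + 1) (shiftedCells lam mu p) X Y =
      ∑ ν ∈ (interlacing p lam).filter fun ν => StrictRows ν ∧ ∀ i, mu i ≤ extendZero ν i,
        (∏ i : Fin p, stepCoeff (X (Fin.last n)) (Y (Fin.last n)) (lam i) (lam (i + 1)) (ν i)) *
          QGen n (shiftedCells (extendZero ν) mu p)
            (fun k => X k.castSucc) (fun k => Y k.castSucc) := by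
  have hlam0 := le_zero_of_succ_lt hlam
  rw [QGen_succ]
  symm
  refine Finset.sum_of_injOn (fun ν => shiftedCells (extendZero ν) mu p) ?_ ?_ ?_ ?_
  · intro ν hν ν' hν' h
    simp only [Finset.coe_filter, Set.mem_ofPred_eq] at hν hν'
    have h0 := le_zero_of_succ_lt hν.2.1
    have h0' := le_zero_of_succ_lt hν'.2.1
    dsimp only at h
    funext i
    have hm := hν.2.2 i
    have hm' := hν'.2.2 i
    rw [extendZero_of_lt] at hm hm'
    have key : ∀ c, mu i ≤ c → (c < ν i ↔ c < ν' i) := by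
      intro c hc
      have := Finset.ext_iff.1 h ((i : ℕ), (i : ℕ) + c)
      rw [mem_shiftedCells h0, mem_shiftedCells h0'] at this
      dsimp only at this
      rw [extendZero_of_lt, extendZero_of_lt] at this
      have := i.2
      omega
    have k1 := key (ν i) hm
    have k2 := key (ν' i) hm'
    omega
  · intro ν hν
    simp only [Finset.coe_filter, Set.mem_ofPred_eq] at hν
    have h0 := le_zero_of_succ_lt hν.2.1
    have hi := mem_interlacing.1 hν.1
    simp only [Finset.coe_filter, Set.mem_ofPred_eq, Finset.mem_powerset]
    constructor
    · intro c hc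
      rw [mem_shiftedCells h0] at hc
      rw [mem_shiftedCells hlam0]
      have h2 := hi ⟨c.1, hc.1⟩
      have h3 := extendZero_of_lt ν ⟨c.1, hc.1⟩
      dsimp only at h2 h3
      omega
    · rintro c hc d hd hcd
      rw [mem_shiftedCells h0] at hd ⊢
      rw [mem_shiftedCells hlam0] at hc
      rcases hcd with ⟨h1, h2⟩ | ⟨h1, h2⟩
      · rw [h1] at hd
        omega
      · rw [h1, h2] at hd
        have := hν.2.1 c.1 (by omega)
        omega
  · intro D hD hDim
    rw [Finset.mem_filter, Finset.mem_powerset] at hD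
    by_contra hne
    obtain ⟨ν, hν1, hν2, hν3, hν4⟩ := exists_interlacing hlam hlampos hlamlen hlam0 hmu hsub hD.1
      hD.2 (by
        rintro c hc ⟨h1, h2⟩
        refine hne (mul_eq_zero_of_right _ (Finset.prod_eq_zero hc ?_))
        rw [stripWeight, if_pos h1, if_pos h2, add_zero])
    refine hDim ⟨ν, ?_, ?_⟩
    · simp only [Finset.coe_filter, Set.mem_ofPred_eq]
      exact ⟨hν1, hν2, hν3⟩
    · ext c
      rw [hν4, mem_shiftedCells (le_zero_of_succ_lt hν2)]
  · intro ν hν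
    rw [Finset.mem_filter] at hν
    rw [prod_stripWeight hlamlen hlam0 hν.1 hν.2.1 (le_zero_of_succ_lt hν.2.1) hν.2.2, mul_comm]

end Recursion

section Entries

variable {R : Type*} [CommRing R]

theorem QGen_empty (n : ℕ) (X Y : Fin n → ℤ → R) : QGen n ∅ X Y = 1 := by
  rw [QGen_eq, Finset.filter_true_of_mem fun T _ => ⟨fun p => absurd p.2 (Finset.notMem_empty _),
    fun p => absurd p.2 (Finset.notMem_empty _)⟩]
  simp

/-- The boxes of contents `b, …, a - 1` in the first row. -/
def rowSegment (b a : ℕ) : Finset (ℕ × ℕ) := (Finset.Ico b a).image fun j => (0, j)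

theorem mem_rowSegment {b a : ℕ} {c : ℕ × ℕ} :
    c ∈ rowSegment b a ↔ c.1 = 0 ∧ b ≤ c.2 ∧ c.2 < a := by
  obtain ⟨i, j⟩ := c
  simp only [rowSegment, Finset.mem_image, Finset.mem_Ico, Prod.mk.injEq]
  constructor
  · rintro ⟨k, hk, rfl, rfl⟩
    exact ⟨rfl, hk⟩
  · rintro ⟨rfl, hj⟩
    exact ⟨j, hj, rfl, rfl⟩

theorem rowSegment_eq_empty {b a : ℕ} : rowSegment b a = ∅ ↔ a ≤ b := by
  simp [rowSegment]

theorem qTwoRow_zero_right (n a : ℕ) (X Y : Fin n → ℤ → R) :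
    qTwoRow n a 0 X Y = QGen n (rowSegment 0 a) X Y := by
  rw [qTwoRow]
  congr 1
  ext c
  rw [mem_shiftedCells (by intro i; split_ifs <;> omega), mem_rowSegment]
  split_ifs <;> omega

theorem qTwoRow_zero_zero (n : ℕ) (X Y : Fin n → ℤ → R) : qTwoRow n 0 0 X Y = 1 := by
  rw [qTwoRow_zero_right, rowSegment_eq_empty.2 le_rfl, QGen_empty]

theorem qTwoRow_zero_letters {a b : ℕ} (hab : b < a) (X Y : Fin 0 → ℤ → R) :
    qTwoRow 0 a b X Y = 0 := by
  rw [qTwoRow, QGen_zero, if_neg]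
  rw [← Ne, ← Finset.nonempty_iff_ne_empty]
  refine ⟨(0, 0), ?_⟩
  rw [mem_shiftedCells (by intro i; split_ifs <;> omega)]
  simp only [if_true]
  omega

theorem qRowShift_eq (n a b : ℕ) (X Y : Fin n → ℤ → R) :
    qRowShift n ((a : ℤ) - b) b X Y = if b ≤ a then QGen n (rowSegment b a) X Y else 0 := by
  rw [qRowShift]
  by_cases h : b ≤ a
  · rw [if_neg (by omega), if_pos h, ← QGen_image_add_right]
    congr 1
    ext c
    rw [mem_rowSegment]
    obtain ⟨i, j⟩ := c
    simp only [rowCells, Finset.mem_image, Finset.mem_range, Prod.mk.injEq,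
      exists_exists_and_eq_and]
    constructor
    · rintro ⟨k, hk, rfl, rfl⟩
      omega
    · rintro ⟨rfl, h1, h2⟩
      exact ⟨j - b, by omega, rfl, by omega⟩
  · rw [if_pos (by omega), if_neg h]

theorem qRowShift_zero_letters (a b : ℕ) (X Y : Fin 0 → ℤ → R) :
    qRowShift 0 ((a : ℤ) - b) b X Y = if a = b then 1 else 0 := by
  rw [qRowShift_eq, QGen_zero]
  simp only [rowSegment_eq_empty]
  split_ifs <;> first | rfl | omega

theorem stepCoeff_self (x y : ℤ → R) (a b : ℕ) : stepCoeff x y a b a = 1 := by simp [stepCoeff]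

theorem QGen_rowSegment_succ {n b a : ℕ} (hba : b ≤ a) (X Y : Fin (n + 1) → ℤ → R) :
    QGen (n + 1) (rowSegment b a) X Y =
      ∑ c ∈ Finset.Icc b a, stepCoeff (X (Fin.last n)) (Y (Fin.last n)) a 0 c *
        QGen n (rowSegment b c) (fun k => X k.castSucc) (fun k => Y k.castSucc) := by
  rcases Nat.eq_zero_or_pos a with rfl | ha
  · obtain rfl : b = 0 := by omega
    simp [rowSegment_eq_empty.2, QGen_empty, stepCoeff_self]
  have hcells : ∀ f : ℕ → ℕ, (∀ i, 0 < i → f i = 0) →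
      shiftedCells f (fun i => if i = 0 then b else 0) 1 = rowSegment b (f 0) := by
    intro f hf
    ext c
    rw [mem_shiftedCells (by intro i hi; obtain rfl : i = 0 := by omega
                             rfl), mem_rowSegment]
    constructor
    · rintro ⟨h1, h2, h3⟩
      obtain h0 : c.1 = 0 := by omega
      simp only [h0, if_true] at h2 h3
      omega
    · rintro ⟨h1, h2, h3⟩
      simp only [h1, if_true]
      omega
  have hrec := QGen_shiftedCells_succ (n := n) (p := 1) (lam := fun i => if i = 0 then a else 0)
    (mu := fun i => if i = 0 then b else 0) (by intro i hi; omega)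
    (by intro i hi; rw [if_pos (by omega)]; exact ha)
    (by intro i hi; rw [if_neg (by omega)]) (by intro i; right; rfl)
    (by intro i; split_ifs <;> omega) X Y
  rw [hcells _ (by intro i hi; rw [if_neg (by omega)])] at hrec
  refine hrec.trans (Finset.sum_nbij' (fun ν => ν 0) (fun c _ => c) ?_ ?_ ?_ ?_ ?_)
  · intro ν hν
    rw [Finset.mem_filter, mem_interlacing] at hν
    have h1 := hν.1 0
    have h2 := hν.2.2 0
    have h3 := extendZero_of_lt ν 0
    simp only [Fin.val_zero, if_true] at h1 h2 h3
    rw [Finset.mem_Icc]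
    omega
  · intro c hc
    rw [Finset.mem_Icc] at hc
    rw [Finset.mem_filter, mem_interlacing]
    refine ⟨?_, ?_, ?_⟩
    · intro i
      fin_cases i
      simpa using hc.2
    · intro i hi
      omega
    · intro i
      rcases Nat.eq_zero_or_pos i with rfl | hi
      · simpa [extendZero] using hc.1
      · rw [if_neg (by omega)]
        exact Nat.zero_le _
  · intro ν _
    funext i
    fin_cases i
    rfl
  · intro c _
    rfl
  · intro ν hν
    rw [hcells _ (fun i hi => extendZero_of_le _ hi)]
    simp [extendZero]

theorem qTwoRow_zero_right_succ (n a : ℕ) (X Y : Fin (n + 1) → ℤ → R) :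
    qTwoRow (n + 1) a 0 X Y =
      ∑ c ∈ Finset.Icc 0 a, stepCoeff (X (Fin.last n)) (Y (Fin.last n)) a 0 c *
        qTwoRow n c 0 (fun k => X k.castSucc) (fun k => Y k.castSucc) := by
  simp only [qTwoRow_zero_right]
  exact QGen_rowSegment_succ (Nat.zero_le a) X Y

theorem qRowShift_succ (n a b : ℕ) (X Y : Fin (n + 1) → ℤ → R) :
    qRowShift (n + 1) ((a : ℤ) - b) b X Y =
      ∑ c ∈ Finset.Icc 0 a, stepCoeff (X (Fin.last n)) (Y (Fin.last n)) a 0 c *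
        qRowShift n ((c : ℤ) - b) b (fun k => X k.castSucc) (fun k => Y k.castSucc) := by
  simp only [qRowShift_eq, mul_ite, mul_zero]
  rw [← Finset.sum_filter]
  split_ifs with h
  · rw [QGen_rowSegment_succ h]
    refine Finset.sum_congr ?_ fun _ _ => rfl
    ext c
    simp only [Finset.mem_Icc, Finset.mem_filter]
    omega
  · rw [Finset.filter_false_of_mem, Finset.sum_empty]
    intro c hc
    rw [Finset.mem_Icc] at hc
    omega

theorem qTwoRow_succ {n a b : ℕ} (hb : 0 < b) (hab : b < a) (X Y : Fin (n + 1) → ℤ → R) :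
    qTwoRow (n + 1) a b X Y =
      ∑ c ∈ Finset.Icc b a, ∑ d ∈ Finset.Icc 0 b,
        if d < c then stepCoeff (X (Fin.last n)) (Y (Fin.last n)) a b c *
          stepCoeff (X (Fin.last n)) (Y (Fin.last n)) b 0 d *
          qTwoRow n c d (fun k => X k.castSucc) (fun k => Y k.castSucc) else 0 := by
  rw [← Finset.sum_product', ← Finset.sum_filter]
  have hrec := QGen_shiftedCells_succ (n := n) (p := 2)
    (lam := fun i => if i = 0 then a else if i = 1 then b else 0) (mu := fun _ => 0)
    (by intro i hi; obtain rfl : i = 0 := by omega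
        simpa using hab)
    (by intro i hi; split_ifs <;> omega)
    (by intro i hi; rw [if_neg (by omega), if_neg (by omega)]) (by intro i; right; rfl)
    (by intro i; exact Nat.zero_le _) X Y
  refine hrec.trans (Finset.sum_nbij' (fun ν => (ν 0, ν 1)) (fun c => ![c.1, c.2]) ?_ ?_ ?_ ?_ ?_)
  · intro ν hν
    rw [Finset.mem_filter, mem_interlacing] at hν
    have h1 := hν.1 0
    have h2 := hν.1 1
    have h3 := hν.2.1 0 (by omega)
    have h4 := extendZero_of_lt ν 0
    have h5 := extendZero_of_lt ν 1
    simp at h1 h2 h3 h4 h5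
    simp only [Finset.mem_filter, Finset.mem_product, Finset.mem_Icc]
    omega
  · rintro ⟨c, d⟩ hc
    simp only [Finset.mem_filter, Finset.mem_product, Finset.mem_Icc] at hc
    rw [Finset.mem_filter, mem_interlacing]
    refine ⟨?_, ?_, fun i => Nat.zero_le _⟩
    · intro i
      fin_cases i <;> simp <;> omega
    · intro i hi
      obtain rfl : i = 0 := by omega
      simpa [extendZero] using hc.2
  · intro ν _
    funext i
    fin_cases i <;> rfl
  · intro c _
    rfl
  · intro ν hν
    rw [Fin.prod_univ_two, qTwoRow]
    have hext : extendZero ν = fun i => if i = 0 then ν 0 else if i = 1 then ν 1 else 0 := by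
      funext i
      rcases i with _ | _ | i <;> simp [extendZero]
    rw [hext]
    simp

end Entries

section Forms

variable {R : Type*} [CommRing R]

/-- The bilinear form on a free module with given values on the basis. -/
noncomputable def formOfEntries {I : Type*} (a : I → I → R) : LinearMap.BilinForm R (I →₀ R) :=
  Finsupp.linearCombination R fun i => Finsupp.linearCombination R (a i)

theorem formOfEntries_single {I : Type*} (a : I → I → R) (i j : I) :
    formOfEntries a (Finsupp.single i 1) (Finsupp.single j 1) = a i j := by
  simp [formOfEntries]

theorem formOfEntries_antisymm {I : Type*} {a : I → I → R} (h : ∀ i j, a i j = -a j i)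
    (v w : I →₀ R) : formOfEntries a v w = -formOfEntries a w v := by
  have : formOfEntries a = -(formOfEntries a).flip := by
    ext i j
    simpa [formOfEntries] using h i j
  exact congrArg (fun f : LinearMap.BilinForm R (I →₀ R) => f v w) this

theorem formOfEntries_self {I : Type*} {a : I → I → R} (h : ∀ i j, a i j = -a j i)
    (h0 : ∀ i, a i i = 0) (v : I →₀ R) : formOfEntries a v v = 0 := by
  induction v using Finsupp.induction_linear with
  | zero => simp
  | add v w hv hw =>
    simp only [map_add, LinearMap.add_apply, hv, hw, formOfEntries_antisymm h v w]
    ring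
  | single i r => simp [formOfEntries, h0]

/-- Labels of the basis vectors: rows of the outer shape, a padding row, rows of the inner
shape. -/
inductive RowLabel
  | row (a : ℕ)
  | phantom
  | col (b : ℕ)

open RowLabel

/-- The entries of the Józefiak–Pragacz–Nimmo matrix. -/
noncomputable def jpnEntry (n : ℕ) (X Y : Fin n → ℤ → R) : RowLabel → RowLabel → R
  | row a, row b =>
    if b < a then qTwoRow n a b X Y else if a < b then -qTwoRow n b a X Y else 0
  | row a, phantom => qTwoRow n a 0 X Y
  | phantom, row a => -qTwoRow n a 0 X Y
  | row a, col b => qRowShift n ((a : ℤ) - b) b X Y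
  | col b, row a => -qRowShift n ((a : ℤ) - b) b X Y
  | phantom, phantom => 0
  | phantom, col _ => 0
  | col _, phantom => 0
  | col _, col _ => 0

theorem jpnEntry_antisymm (n : ℕ) (X Y : Fin n → ℤ → R) (i j : RowLabel) :
    jpnEntry n X Y i j = -jpnEntry n X Y j i := by
  cases i <;> cases j <;> simp only [jpnEntry, neg_neg, neg_zero]
  split_ifs <;> first | omega | simp

theorem jpnEntry_self (n : ℕ) (X Y : Fin n → ℤ → R) (i : RowLabel) :
    jpnEntry n X Y i i = 0 := by
  cases i <;> simp [jpnEntry]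

/-- The alternating form with matrix `jpnEntry`. -/
noncomputable def jpnForm (n : ℕ) (X Y : Fin n → ℤ → R) : LinearMap.BilinForm R (RowLabel →₀ R) :=
  formOfEntries (jpnEntry n X Y)

theorem jpnForm_self (n : ℕ) (X Y : Fin n → ℤ → R) (v : RowLabel →₀ R) :
    jpnForm n X Y v v = 0 :=
  formOfEntries_self (jpnEntry_antisymm n X Y) (jpnEntry_self n X Y) v

/-- The basis vector with a given label. -/
noncomputable def labelVec (R : Type*) [CommRing R] (i : RowLabel) : RowLabel →₀ R :=
  Finsupp.single i 1

theorem jpnForm_labelVec (n : ℕ) (X Y : Fin n → ℤ → R) (i j : RowLabel) :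
    jpnForm n X Y (labelVec R i) (labelVec R j) = jpnEntry n X Y i j :=
  formOfEntries_single _ i j

/-- The generating vector of the ways to remove boxes filled with one letter from a row of
length `a` above a row of length `b`. -/
noncomputable def stepRow (x y : ℤ → R) (a b : ℕ) : RowLabel →₀ R :=
  ∑ c ∈ Finset.Icc b a, stepCoeff x y a b c • labelVec R (row c)

theorem stepRow_zero (x y : ℤ → R) {a b : ℕ} (hb : 0 < b) (hab : b < a) :
    stepRow x y a 0 = stepRow x y a b + (∏ d ∈ Finset.Ico b a, x d) • stepRow x y b 0 := by
  have h1 : stepRow x y a b = ∑ c ∈ Finset.Icc 0 a,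
      if b ≤ c then stepCoeff x y a b c • labelVec R (row c) else 0 := by
    rw [← Finset.sum_filter]
    refine Finset.sum_congr ?_ fun _ _ => rfl
    ext c
    simp only [Finset.mem_Icc, Finset.mem_filter]
    omega
  have h2 : stepRow x y b 0 = ∑ c ∈ Finset.Icc 0 a,
      if c ≤ b then stepCoeff x y b 0 c • labelVec R (row c) else 0 := by
    rw [← Finset.sum_filter]
    refine Finset.sum_congr ?_ fun _ _ => rfl
    ext c
    simp only [Finset.mem_Icc, Finset.mem_filter]
    omega
  rw [h1, h2, Finset.smul_sum, ← Finset.sum_add_distrib]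
  refine Finset.sum_congr rfl fun c hc => ?_
  rw [Finset.mem_Icc] at hc
  rcases lt_trichotomy c b with h | rfl | h
  · rw [if_neg (by omega), if_pos h.le, zero_add, smul_smul]
    congr 1
    have hu : Finset.Ioo c a = Finset.Ioo c b ∪ Finset.Ico b a := by
      ext d
      simp only [Finset.mem_Ioo, Finset.mem_union, Finset.mem_Ico]
      omega
    have hd : Disjoint (Finset.Ioo c b) (Finset.Ico b a) := by
      rw [Finset.disjoint_left]
      intro d
      simp only [Finset.mem_Ioo, Finset.mem_Ico]
      omega
    simp only [stepCoeff, if_neg (show c ≠ a by omega), if_neg h.ne, ne_eq, not_true, and_false,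
      if_false]
    rw [hu, Finset.prod_union hd]
    ring
  · rw [if_pos le_rfl, if_pos le_rfl, smul_smul, ← add_smul, stepCoeff_self,
      ← Finset.Ioo_insert_left hab, Finset.prod_insert (by simp)]
    congr 1
    simp only [stepCoeff, if_neg hab.ne, hb.ne', ne_eq, not_false_eq_true, and_self, if_true,
      not_true, if_false]
    ring
  · rw [if_pos h.le, if_neg (by omega), smul_zero, add_zero]
    congr 1
    simp only [stepCoeff, h.ne', false_and, if_false, ne_eq, not_true, and_false]

/-- The effect of removing the largest letter on a label. -/
noncomputable def stepVec (x y : ℤ → R) : RowLabel → RowLabel →₀ R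
  | row a => stepRow x y a 0
  | i => labelVec R i

/-- The pairs of labels occurring in order in a Józefiak–Pragacz–Nimmo matrix. -/
inductive RowLabel.Ordered : RowLabel → RowLabel → Prop
  | row_row {a b : ℕ} (hb : 0 < b) (hab : b < a) : Ordered (row a) (row b)
  | row_phantom (a : ℕ) : Ordered (row a) phantom
  | row_col (a b : ℕ) : Ordered (row a) (col b)
  | phantom_col (b : ℕ) : Ordered phantom (col b)
  | col_col (b c : ℕ) : Ordered (col b) (col c)

theorem jpnEntry_succ {n : ℕ} (X Y : Fin (n + 1) → ℤ → R) {i j : RowLabel} (hij : i.Ordered j) :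
    jpnEntry (n + 1) X Y i j =
      jpnForm n (fun k => X k.castSucc) (fun k => Y k.castSucc)
        (stepVec (X (Fin.last n)) (Y (Fin.last n)) i)
        (stepVec (X (Fin.last n)) (Y (Fin.last n)) j) := by
  cases hij with
  | @row_row a b hb hab =>
    simp only [stepVec]
    rw [stepRow_zero _ _ hb hab, map_add, LinearMap.add_apply, map_smul, LinearMap.smul_apply,
      jpnForm_self, smul_zero, add_zero, jpnEntry, if_pos hab, qTwoRow_succ hb hab]
    simp only [stepRow, map_sum, LinearMap.sum_apply, map_smul, LinearMap.smul_apply,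
      jpnForm_labelVec, smul_eq_mul]
    rw [Finset.sum_comm]
    refine Finset.sum_congr rfl fun d hd => ?_
    rw [Finset.mul_sum]
    refine Finset.sum_congr rfl fun c hc => ?_
    rw [Finset.mem_Icc] at hc hd
    by_cases h : d < c
    · simp only [jpnEntry, if_pos h]
      ring
    · simp only [jpnEntry, if_neg h, if_neg (show ¬ c < d by omega), mul_zero]
  | row_phantom a =>
    simp only [stepVec, stepRow, map_sum, LinearMap.sum_apply, map_smul, LinearMap.smul_apply,
      jpnForm_labelVec, smul_eq_mul, jpnEntry]
    exact qTwoRow_zero_right_succ n a X Y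
  | row_col a b =>
    simp only [stepVec, stepRow, map_sum, LinearMap.sum_apply, map_smul, LinearMap.smul_apply,
      jpnForm_labelVec, smul_eq_mul, jpnEntry]
    exact qRowShift_succ n a b X Y
  | phantom_col b => simp only [stepVec, jpnForm_labelVec, jpnEntry]
  | col_col b c => simp only [stepVec, jpnForm_labelVec, jpnEntry]

end Forms

section Labels

variable {R : Type*} [CommRing R]

open RowLabel

/-- The sequences underlying strict partitions with `p` positive parts. -/
structure StrictSeq (f : ℕ → ℕ) (p : ℕ) : Prop where
  lt : ∀ i, i + 1 < p → f (i + 1) < f i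
  pos : ∀ i, i < p → 0 < f i
  zero : ∀ i, p ≤ i → f i = 0

theorem StrictSeq.lt_of_lt {f : ℕ → ℕ} {p : ℕ} (h : StrictSeq f p) {i j : ℕ} (hij : i < j)
    (hj : j < p) : f j < f i := by
  induction j, hij using Nat.le_induction with
  | base => exact h.lt i hj
  | succ j _ ih => exact (h.lt j hj).trans (ih (by omega))

theorem StrictSeq.le_zero {f : ℕ → ℕ} {p : ℕ} (h : StrictSeq f p) (i : ℕ) : f i ≤ f 0 := by
  by_cases hi : i < p
  · exact le_zero_of_succ_lt h.lt i hi
  · rw [h.zero i (by omega)]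
    exact Nat.zero_le _

theorem StrictSeq.tail {f : ℕ → ℕ} {p : ℕ} (h : StrictSeq f (p + 1)) :
    StrictSeq (fun i => f (i + 1)) p :=
  ⟨fun i hi => h.lt (i + 1) (by omega), fun i hi => h.pos (i + 1) (by omega),
    fun i hi => h.zero (i + 1) (by omega)⟩

/-- The padding row and the rows of the inner shape, from bottom to top. -/
def innerLabels (mu : ℕ → ℕ) (p q : ℕ) : List RowLabel :=
  (if Even (p + q) then [] else [phantom]) ++ ((List.range q).map fun k => col (mu k)).reverse

/-- The labels of the rows of the Józefiak–Pragacz–Nimmo matrix. -/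
def jpnLabels (lam mu : ℕ → ℕ) (p q : ℕ) : List RowLabel :=
  ((List.range p).map fun k => row (lam k)) ++ innerLabels mu p q

theorem mem_innerLabels {mu : ℕ → ℕ} {p q : ℕ} {i : RowLabel} :
    i ∈ innerLabels mu p q ↔ (¬Even (p + q) ∧ i = phantom) ∨ ∃ k < q, col (mu k) = i := by
  by_cases h : Even (p + q) <;> simp [innerLabels, h]

theorem mem_jpnLabels {lam mu : ℕ → ℕ} {p q : ℕ} {i : RowLabel} :
    i ∈ jpnLabels lam mu p q ↔
      (∃ k < p, row (lam k) = i) ∨ (¬Even (p + q) ∧ i = phantom) ∨ ∃ k < q, col (mu k) = i := by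
  simp [jpnLabels, mem_innerLabels]

theorem even_length_jpnLabels (lam mu : ℕ → ℕ) (p q : ℕ) :
    Even (jpnLabels lam mu p q).length := by
  by_cases h : Even (p + q)
  · simp [jpnLabels, innerLabels, h]
  · simp only [jpnLabels, innerLabels, h, if_false, List.length_append, List.length_map,
      List.length_range, List.length_reverse, List.length_singleton]
    rw [Nat.not_even_iff_odd] at h
    have := h.add_one
    rwa [show p + (1 + q) = p + q + 1 by ring]

theorem map_range_succ {α : Type*} (f : ℕ → α) (p : ℕ) :
    (List.range (p + 1)).map f = f 0 :: (List.range p).map fun k => f (k + 1) := by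
  rw [List.range_succ_eq_map, List.map_cons, List.map_map]
  rfl

theorem jpnLabels_succ_left (lam mu : ℕ → ℕ) (p q : ℕ) :
    jpnLabels lam mu (p + 1) q = row (lam 0) ::
      (((List.range p).map fun k => row (lam (k + 1))) ++ innerLabels mu (p + 1) q) := by
  rw [jpnLabels, map_range_succ, List.cons_append]

theorem innerLabels_succ (mu : ℕ → ℕ) (p q : ℕ) :
    innerLabels mu p (q + 1) = innerLabels (fun k => mu (k + 1)) (p + 1) q ++ [col (mu 0)] := by
  rw [innerLabels, innerLabels, map_range_succ, List.reverse_cons, List.append_assoc,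
    show p + (q + 1) = p + 1 + q by ring]

theorem innerLabels_add_two (mu : ℕ → ℕ) (p q : ℕ) :
    innerLabels mu (p + 2) q = innerLabels mu p q := by
  simp [innerLabels, Nat.even_add]

theorem jpnLabels_succ_succ (lam mu : ℕ → ℕ) (p q : ℕ) :
    jpnLabels lam mu (p + 1) (q + 1) = row (lam 0) ::
      (jpnLabels (fun k => lam (k + 1)) (fun k => mu (k + 1)) p q ++ [col (mu 0)]) := by
  rw [jpnLabels_succ_left, innerLabels_succ, innerLabels_add_two, jpnLabels, List.append_assoc]

theorem jpnLabels_pairwise {lam mu : ℕ → ℕ} {p : ℕ} (h : StrictSeq lam p) (q : ℕ) :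
    (jpnLabels lam mu p q).Pairwise RowLabel.Ordered := by
  rw [jpnLabels, List.pairwise_append]
  refine ⟨?_, ?_, ?_⟩
  · rw [List.pairwise_map]
    refine (List.pairwise_lt_range (n := p)).imp_of_mem fun {i j} _ hj hij => ?_
    rw [List.mem_range] at hj
    exact Ordered.row_row (h.pos _ hj) (h.lt_of_lt hij hj)
  · rw [innerLabels, List.pairwise_append]
    refine ⟨?_, ?_, ?_⟩
    · split_ifs <;> simp
    · rw [List.pairwise_reverse, List.pairwise_map]
      exact List.pairwise_of_forall fun _ _ => Ordered.col_col _ _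
    · intro i hi j hj
      simp only [List.mem_reverse, List.mem_map] at hj
      obtain ⟨k, -, rfl⟩ := hj
      split_ifs at hi
      · simp at hi
      · rw [List.mem_singleton] at hi
        subst hi
        exact Ordered.phantom_col _
  · intro i hi j hj
    rw [List.mem_map] at hi
    obtain ⟨k, -, rfl⟩ := hi
    rw [mem_innerLabels] at hj
    rcases hj with ⟨-, rfl⟩ | ⟨k, -, rfl⟩
    · exact Ordered.row_phantom _
    · exact Ordered.row_col _ _

/-- The Pfaffian of the matrix `jpnEntry` on a list of labels. -/
noncomputable def labelPfaffian (n : ℕ) (X Y : Fin n → ℤ → R) (s : List RowLabel) : R :=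
  pfFunctional (jpnForm n X Y) (jpnForm_self n X Y) (extProd (s.map (labelVec R)))

theorem labelPfaffian_unpaired (n : ℕ) (X Y : Fin n → ℤ → R) (i : RowLabel) (l l' : List RowLabel)
    (h : ∀ j ∈ l ++ l', jpnEntry n X Y i j = 0) : labelPfaffian n X Y (l ++ i :: l') = 0 := by
  rw [labelPfaffian, List.map_append, List.map_cons]
  apply pfFunctional_unpaired <;>
  · intro v hv
    rw [List.mem_map] at hv
    obtain ⟨j, hj, rfl⟩ := hv
    rw [jpnForm_labelVec]
    exact h j (by simp [hj])

theorem labelPfaffian_row_col_zero_letters {X Y : Fin 0 → ℤ → R} (a : ℕ) (l : List RowLabel)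
    (h : ∀ j ∈ l, jpnEntry 0 X Y (row a) j = 0) (hl : Even l.length) :
    labelPfaffian 0 X Y (row a :: (l ++ [col a])) = labelPfaffian 0 X Y l := by
  rw [labelPfaffian, List.map_cons, List.map_append, extProd_cons, pfFunctional_ι_mul,
    List.map_singleton, extContract_extProd_append, List.length_map, hl.neg_one_pow,
    jpnForm_labelVec, jpnEntry, qRowShift_zero_letters, if_pos rfl, one_mul, one_smul,
    labelPfaffian]
  intro v hv
  rw [List.mem_map] at hv
  obtain ⟨j, hj, rfl⟩ := hv
  rw [jpnForm_labelVec]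
  exact h j hj

theorem jpnEntry_row_row_zero_letters (X Y : Fin 0 → ℤ → R) (a b : ℕ) :
    jpnEntry 0 X Y (row a) (row b) = 0 := by
  simp only [jpnEntry]
  split_ifs with h h'
  · exact qTwoRow_zero_letters h X Y
  · rw [qTwoRow_zero_letters h' X Y, neg_zero]
  · rfl

theorem jpnEntry_row_zero_letters (X Y : Fin 0 → ℤ → R) {a : ℕ} (ha : 0 < a) {j : RowLabel}
    (hj : j ≠ col a) : jpnEntry 0 X Y (row a) j = 0 := by
  cases j with
  | row b => exact jpnEntry_row_row_zero_letters X Y a b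
  | phantom => exact qTwoRow_zero_letters ha X Y
  | col c =>
    rw [jpnEntry, qRowShift_zero_letters, if_neg]
    rintro rfl
    exact hj rfl

theorem jpnEntry_col_zero_letters (X Y : Fin 0 → ℤ → R) {b : ℕ} {j : RowLabel}
    (hj : j ≠ row b) : jpnEntry 0 X Y (col b) j = 0 := by
  cases j with
  | row a =>
    rw [jpnEntry, qRowShift_zero_letters, if_neg, neg_zero]
    rintro rfl
    exact hj rfl
  | phantom => rfl
  | col c => rfl

theorem labelPfaffian_zero_letters_of_lt (X Y : Fin 0 → ℤ → R) {p q : ℕ} {lam mu : ℕ → ℕ}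
    (hlam : StrictSeq lam p) (hmu : StrictSeq mu q) (h : lam 0 < mu 0) :
    labelPfaffian 0 X Y (jpnLabels lam mu p q) = 0 := by
  obtain _ | q := q
  · rw [hmu.zero 0 le_rfl] at h
    omega
  rw [jpnLabels, innerLabels_succ, ← List.append_assoc]
  refine labelPfaffian_unpaired 0 X Y _ _ [] fun j hj => jpnEntry_col_zero_letters X Y ?_
  rintro rfl
  simp only [List.append_nil, List.mem_append, List.mem_map, mem_innerLabels, row.injEq,
    reduceCtorEq, and_false, exists_false, or_false, List.mem_range] at hj
  obtain ⟨k, -, hk⟩ := hj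
  have := hlam.le_zero k
  omega

theorem labelPfaffian_zero_letters_of_gt (X Y : Fin 0 → ℤ → R) {p q : ℕ} {lam mu : ℕ → ℕ}
    (hlam : StrictSeq lam p) (hmu : StrictSeq mu q) (h : mu 0 < lam 0) :
    labelPfaffian 0 X Y (jpnLabels lam mu p q) = 0 := by
  obtain _ | p := p
  · rw [hlam.zero 0 le_rfl] at h
    omega
  rw [jpnLabels_succ_left]
  refine labelPfaffian_unpaired 0 X Y _ [] _ fun j hj =>
    jpnEntry_row_zero_letters X Y (by omega) ?_
  rintro rfl
  simp only [List.nil_append, List.mem_append, List.mem_map, mem_innerLabels, col.injEq,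
    reduceCtorEq, and_false, exists_false, false_or] at hj
  obtain ⟨k, -, hk⟩ := hj
  have := hmu.le_zero k
  omega

theorem labelPfaffian_zero_letters (X Y : Fin 0 → ℤ → R) {p q : ℕ} {lam mu : ℕ → ℕ}
    (hlam : StrictSeq lam p) (hmu : StrictSeq mu q) :
    labelPfaffian 0 X Y (jpnLabels lam mu p q) = if ∀ i, lam i = mu i then 1 else 0 := by
  induction p generalizing q lam mu with
  | zero =>
    have hl := hlam.zero 0 le_rfl
    cases q with
    | zero =>
      rw [if_pos fun i => by rw [hlam.zero i (Nat.zero_le i), hmu.zero i (Nat.zero_le i)]]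
      simp [jpnLabels, innerLabels, labelPfaffian, extProd_nil, pfFunctional_one]
    | succ q =>
      have hm := hmu.pos 0 (by omega)
      rw [if_neg fun h => by have := h 0; omega]
      exact labelPfaffian_zero_letters_of_lt X Y hlam hmu (by omega)
  | succ p ih =>
    have hpos := hlam.pos 0 (by omega)
    rcases lt_trichotomy (lam 0) (mu 0) with h | h | h
    · rw [if_neg fun h' => h.ne (h' 0), labelPfaffian_zero_letters_of_lt X Y hlam hmu h]
    · obtain _ | q := q
      · rw [hmu.zero 0 le_rfl] at h
        omega
      rw [jpnLabels_succ_succ, ← h, labelPfaffian_row_col_zero_letters _ _ _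
        (even_length_jpnLabels _ _ p q), ih hlam.tail hmu.tail]
      · refine if_congr ⟨fun h' i => ?_, fun h' i => h' (i + 1)⟩ rfl rfl
        cases i with
        | zero => exact h
        | succ i => exact h' i
      · intro j hj
        refine jpnEntry_row_zero_letters X Y hpos ?_
        rintro rfl
        simp only [mem_jpnLabels, col.injEq, reduceCtorEq, and_false, exists_false, false_or] at hj
        obtain ⟨k, hk, hk'⟩ := hj
        exact (hmu.lt_of_lt (Nat.succ_pos k) (by omega)).ne (hk'.trans h)
    · rw [if_neg fun h' => h.ne' (h' 0), labelPfaffian_zero_letters_of_gt X Y hlam hmu h]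

end Labels

section Step

variable {R : Type*} [CommRing R]

open RowLabel

theorem extProd_stepRow (x y : ℤ → R) {lam : ℕ → ℕ} {p : ℕ} (h : StrictSeq lam p) :
    extProd (R := R) ((List.range p).map fun i => stepRow x y (lam i) 0) =
      extProd ((List.range p).map fun i => stepRow x y (lam i) (lam (i + 1))) := by
  induction p generalizing lam with
  | zero => rfl
  | succ p ih =>
    rw [map_range_succ, map_range_succ, extProd_cons, extProd_cons, ← ih h.tail]
    obtain _ | p := p
    · rw [h.zero (0 + 1) le_rfl]
    · rw [map_range_succ, extProd_cons,
        stepRow_zero x y (h.pos (0 + 1) (by omega)) (h.lt 0 (by omega)), map_add, add_mul,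
        map_smul, smul_mul_assoc,
        ← mul_assoc (ExteriorAlgebra.ι R (stepRow x y (lam (0 + 1)) 0))
          (ExteriorAlgebra.ι R (stepRow x y (lam (0 + 1)) 0)),
        ExteriorAlgebra.ι_sq_zero, zero_mul, smul_zero, add_zero]

theorem extProd_ofFn {M : Type*} [AddCommGroup M] [Module R M] {p : ℕ} (v : Fin p → M) :
    extProd (List.ofFn v) = ExteriorAlgebra.ιMulti R p v := by
  rw [ExteriorAlgebra.ιMulti_apply, extProd, List.map_ofFn]
  rfl

theorem map_range_eq_ofFn {α : Type*} (f : ℕ → α) (p : ℕ) :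
    (List.range p).map f = List.ofFn fun i : Fin p => f i := by
  refine List.ext_getElem (by simp) fun i h h' => by simp

theorem extProd_stepRow_expand (x y : ℤ → R) (lam : ℕ → ℕ) (p : ℕ) :
    extProd (R := R) ((List.range p).map fun i => stepRow x y (lam i) (lam (i + 1))) =
      ∑ ν ∈ interlacing p lam, (∏ i : Fin p, stepCoeff x y (lam i) (lam (i + 1)) (ν i)) •
        extProd (List.ofFn fun i => labelVec R (row (ν i))) := by
  rw [map_range_eq_ofFn, extProd_ofFn]
  simp only [stepRow, extProd_ofFn]
  rw [← AlternatingMap.coe_multilinearMap, MultilinearMap.map_sum_finset]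
  refine Finset.sum_congr rfl fun ν _ => ?_
  rw [MultilinearMap.map_smul_univ]

theorem labelPfaffian_congr_labels {n : ℕ} (X Y : Fin n → ℤ → R) (l l' : List RowLabel)
    (h : ∀ j ∈ l ++ l', jpnEntry n X Y phantom j = jpnEntry n X Y (row 0) j) :
    labelPfaffian n X Y (l ++ row 0 :: l') = labelPfaffian n X Y (l ++ phantom :: l') := by
  have hw := pfFunctional_unpaired (jpnForm n X Y) (jpnForm_self n X Y)
    (labelVec R phantom - labelVec R (row 0)) (l.map (labelVec R)) (l'.map (labelVec R))
    (by
      intro v hv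
      obtain ⟨j, hj, rfl⟩ := List.mem_map.1 hv
      rw [map_sub, LinearMap.sub_apply, jpnForm_labelVec, jpnForm_labelVec,
        h j (by simp [hj]), sub_self])
    (by
      intro v hv
      obtain ⟨j, hj, rfl⟩ := List.mem_map.1 hv
      rw [map_sub, LinearMap.sub_apply, jpnForm_labelVec, jpnForm_labelVec,
        h j (by simp [hj]), sub_self])
  rw [extProd_append, extProd_cons, map_sub, sub_mul, mul_sub, map_sub, sub_eq_zero] at hw
  simp only [labelPfaffian, List.map_append, List.map_cons, extProd_append, extProd_cons]
  exact hw.symm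

theorem labelPfaffian_row_zero_phantom {n : ℕ} (X Y : Fin n → ℤ → R) (l l' : List RowLabel)
    (h : ∀ j ∈ l ++ l', jpnEntry n X Y phantom j = jpnEntry n X Y (row 0) j) :
    labelPfaffian n X Y (l ++ row 0 :: phantom :: l') = labelPfaffian n X Y (l ++ l') := by
  have hw := pfFunctional_pair (jpnForm n X Y) (jpnForm_self n X Y) (labelVec R (row 0))
    (labelVec R phantom - labelVec R (row 0)) (l.map (labelVec R)) (l'.map (labelVec R))
    (by
      intro v hv
      obtain ⟨j, hj, rfl⟩ := List.mem_map.1 hv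
      rw [map_sub, LinearMap.sub_apply, jpnForm_labelVec, jpnForm_labelVec,
        h j (by simp [hj]), sub_self])
    (by
      intro v hv
      obtain ⟨j, hj, rfl⟩ := List.mem_map.1 hv
      rw [map_sub, LinearMap.sub_apply, jpnForm_labelVec, jpnForm_labelVec,
        h j (by simp [hj]), sub_self])
  rw [extProd_append, extProd_cons, extProd_cons, map_sub, sub_mul, mul_sub,
    ← mul_assoc (ExteriorAlgebra.ι R (labelVec R (row 0)))
      (ExteriorAlgebra.ι R (labelVec R (row 0))),
    ExteriorAlgebra.ι_sq_zero, zero_mul, sub_zero, map_sub (jpnForm n X Y _), jpnForm_self,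
    sub_zero,
    jpnForm_labelVec, jpnEntry, qTwoRow_zero_zero, one_mul] at hw
  simp only [labelPfaffian, List.map_append, List.map_cons, extProd_append, extProd_cons]
  rw [hw, extProd_append]

theorem labelPfaffian_row_zero {n : ℕ} (X Y : Fin n → ℤ → R) {p q : ℕ} {nu mu : ℕ → ℕ}
    (hnu : ∀ i, i < p → 0 < nu i) (hmu : StrictSeq mu q) :
    labelPfaffian n X Y
        (((List.range p).map fun k => row (nu k)) ++ row 0 :: innerLabels mu (p + 1) q) =
      labelPfaffian n X Y (jpnLabels nu mu p q) := by
  have h : ∀ j ∈ ((List.range p).map fun k => row (nu k)) ++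
      ((List.range q).map fun k => col (mu k)).reverse,
      jpnEntry n X Y phantom j = jpnEntry n X Y (row 0) j := by
    intro j hj
    simp only [List.mem_append, List.mem_map, List.mem_range, List.mem_reverse] at hj
    rcases hj with ⟨k, hk, rfl⟩ | ⟨k, hk, rfl⟩
    · have := hnu k hk
      simp only [jpnEntry]
      rw [if_neg (by omega), if_pos (by omega)]
    · have := hmu.pos k hk
      simp only [jpnEntry]
      rw [qRowShift_eq, if_neg (by omega)]
  rw [jpnLabels, innerLabels, innerLabels]
  by_cases hp : Even (p + q)
  · rw [if_pos hp, if_neg (by rw [show p + 1 + q = p + q + 1 by ring, Nat.even_add_one]; simpa)]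
    exact labelPfaffian_row_zero_phantom X Y _ _ h
  · rw [if_neg hp, if_pos (by rwa [show p + 1 + q = p + q + 1 by ring, Nat.even_add_one])]
    exact labelPfaffian_congr_labels X Y _ _ h

theorem labelPfaffian_succ {n : ℕ} (X Y : Fin (n + 1) → ℤ → R) {p q : ℕ} {lam mu : ℕ → ℕ}
    (hlam : StrictSeq lam p) :
    labelPfaffian (n + 1) X Y (jpnLabels lam mu p q) = ∑ ν ∈ interlacing p lam,
      (∏ i : Fin p, stepCoeff (X (Fin.last n)) (Y (Fin.last n)) (lam i) (lam (i + 1)) (ν i)) *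
        labelPfaffian n (fun k => X k.castSucc) (fun k => Y k.castSucc)
          ((List.ofFn fun i => row (ν i)) ++ innerLabels mu p q) := by
  rw [labelPfaffian, pfFunctional_congr _ _ (jpnForm n (fun k => X k.castSucc)
    (fun k => Y k.castSucc)) (jpnForm_self n _ _) _ (stepVec (X (Fin.last n)) (Y (Fin.last n)))]
  · have hinner : (innerLabels mu p q).map (stepVec (X (Fin.last n)) (Y (Fin.last n))) =
        (innerLabels mu p q).map (labelVec R) := by
      refine List.map_congr_left fun i hi => ?_
      rcases mem_innerLabels.1 hi with ⟨-, rfl⟩ | ⟨k, -, rfl⟩ <;> rfl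
    rw [jpnLabels, List.map_append, hinner, List.map_map, extProd_append]
    have := (extProd_stepRow (X (Fin.last n)) (Y (Fin.last n)) hlam).trans
      (extProd_stepRow_expand _ _ lam p)
    rw [show (stepVec (X (Fin.last n)) (Y (Fin.last n)) ∘ fun k => row (lam k)) =
      fun i => stepRow (X (Fin.last n)) (Y (Fin.last n)) (lam i) 0 from rfl, this,
      Finset.sum_mul, map_sum]
    refine Finset.sum_congr rfl fun ν _ => ?_
    rw [smul_mul_assoc, map_smul, smul_eq_mul, labelPfaffian, List.map_append, List.map_ofFn,
      extProd_append]
    rfl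
  · refine (jpnLabels_pairwise hlam q).imp fun h => ?_
    rw [jpnForm_labelVec]
    exact jpnEntry_succ X Y h

theorem labelPfaffian_eq_zero_of_eq {n : ℕ} (X Y : Fin n → ℤ → R) {p : ℕ} (ν : Fin p → RowLabel)
    {i j : Fin p} (hij : i ≠ j) (h : ν i = ν j) (l : List RowLabel) :
    labelPfaffian n X Y (List.ofFn ν ++ l) = 0 := by
  rw [labelPfaffian, List.map_append, extProd_append, List.map_ofFn, extProd_ofFn,
    AlternatingMap.map_eq_zero_of_eq _ (labelVec R ∘ ν) (congrArg (labelVec R) h) hij, zero_mul,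
    map_zero]

theorem shiftedCells_succ_of_eq_zero {nu mu : ℕ → ℕ} {p : ℕ}
    (hnu : ∀ i, i < p + 1 → nu i ≤ nu 0) (h : nu p = 0) :
    shiftedCells nu mu (p + 1) = shiftedCells nu mu p := by
  ext c
  rw [mem_shiftedCells hnu, mem_shiftedCells fun i hi => hnu i (by omega)]
  by_cases hc : c.1 = p
  · rw [hc, h]
    omega
  · omega

theorem labelPfaffian_jpnLabels (n : ℕ) (X Y : Fin n → ℤ → R) {p q : ℕ} {lam mu : ℕ → ℕ}
    (hlam : StrictSeq lam p) (hmu : StrictSeq mu q) :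
    labelPfaffian n X Y (jpnLabels lam mu p q) =
      if ∀ i, mu i ≤ lam i then QGen n (shiftedCells lam mu p) X Y else 0 := by
  induction n generalizing p lam with
  | zero =>
    rw [labelPfaffian_zero_letters X Y hlam hmu, QGen_zero, ← ite_and]
    refine if_congr ?_ rfl rfl
    have hmem := fun c => mem_shiftedCells (mu := mu) (l := p) (fun i _ => hlam.le_zero i) c
    constructor
    · intro h
      refine ⟨fun i => (h i).ge, ?_⟩
      rw [Finset.eq_empty_iff_forall_notMem]
      intro c hc
      rw [hmem, h] at hc
      omega
    · rintro ⟨h1, h2⟩ i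
      by_cases hi : i < p
      · by_contra hne
        have := h1 i
        have hc := (hmem (i, i + mu i)).2 (by dsimp only; omega)
        rw [h2] at hc
        exact Finset.notMem_empty _ hc
      · have := h1 i
        rw [hlam.zero i (by omega)] at this ⊢
        omega
  | succ n ih =>
    have hterm : ∀ ν ∈ interlacing p lam,
        labelPfaffian n (fun k => X k.castSucc) (fun k => Y k.castSucc)
          ((List.ofFn fun i => row (ν i)) ++ innerLabels mu p q) =
        if StrictRows ν ∧ ∀ i, mu i ≤ extendZero ν i then
          QGen n (shiftedCells (extendZero ν) mu p) (fun k => X k.castSucc) (fun k => Y k.castSucc)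
        else 0 := by
      intro ν hν
      rw [mem_interlacing] at hν
      by_cases hs : StrictRows ν
      · have hof : (List.ofFn fun i => row (ν i)) =
            (List.range p).map fun k => row (extendZero ν k) := by
          rw [map_range_eq_ofFn]
          simp only [extendZero_of_lt]
        simp only [hs, true_and]
        rw [hof]
        by_cases hpos : ∀ i, i < p → 0 < extendZero ν i
        · exact ih _ _ ⟨hs, hpos, fun i hi => extendZero_of_le ν hi⟩
        · push Not at hpos
          obtain ⟨i, hi, hi0⟩ := hpos
          obtain _ | p := p
          · omega
          obtain rfl : i = p := by
            by_contra hne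
            have := hs i (by omega)
            omega
          have hz : extendZero ν i = 0 := by omega
          have hpos' : ∀ j, j < i → 0 < extendZero ν j := fun j hj => by
            have := hs j (by omega)
            omega
          rw [shiftedCells_succ_of_eq_zero (le_zero_of_succ_lt hs) hz, ← ih _ _
            ⟨fun j hj => hs j (by omega), hpos', fun j hj => ?_⟩,
            ← labelPfaffian_row_zero _ _ hpos' hmu, List.range_succ, List.map_append,
            List.append_assoc, List.map_singleton, hz, List.singleton_append]
          rcases hj.eq_or_lt with rfl | hj
          · exact hz
          · exact extendZero_of_le ν hj
      · rw [if_neg fun h => hs h.1]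
        rw [StrictRows] at hs
        push Not at hs
        obtain ⟨i, hi, h⟩ := hs
        have h1 := extendZero_of_lt ν ⟨i, by omega⟩
        have h2 := extendZero_of_lt ν ⟨i + 1, hi⟩
        have h3 := hν ⟨i, by omega⟩
        have h4 := hν ⟨i + 1, hi⟩
        refine labelPfaffian_eq_zero_of_eq _ _ _ (i := ⟨i, by omega⟩) (j := ⟨i + 1, hi⟩)
          (by simp) ?_ _
        dsimp only at h1 h2 h3 h4 ⊢
        congr 1
        omega
    rw [labelPfaffian_succ X Y hlam, Finset.sum_congr rfl fun ν hν => by rw [hterm ν hν]]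
    simp only [mul_ite, mul_zero]
    rw [← Finset.sum_filter]
    split_ifs with hsub
    · refine (QGen_shiftedCells_succ hlam.lt hlam.pos hlam.zero (fun i => ?_) hsub X Y).symm
      by_cases hi : i + 1 < q
      · exact Or.inl (hmu.lt i hi)
      · exact Or.inr (hmu.zero _ (by omega))
    · refine Finset.sum_eq_zero fun ν hν => absurd (fun i => ?_) hsub
      rw [Finset.mem_filter, mem_interlacing] at hν
      have h1 := hν.2.2 i
      by_cases hi : i < p
      · have h2 := extendZero_of_lt ν ⟨i, hi⟩
        have h3 := hν.1 ⟨i, hi⟩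
        dsimp only at h2 h3
        omega
      · rw [extendZero_of_le ν (by omega)] at h1
        omega

end Step

section FinalLabels

open RowLabel

/-- The label of a given row of the Józefiak–Pragacz–Nimmo matrix. -/
def jpnLabel (lam mu : ℕ → ℕ) (p q i : ℕ) : RowLabel :=
  if i < 2 * ((p + q + 1) / 2) - q then if i < p then row (lam i) else phantom
  else col (mu (q - 1 - (i - (2 * ((p + q + 1) / 2) - q))))

theorem ofFn_jpnLabel (lam mu : ℕ → ℕ) (p q : ℕ) :
    (List.ofFn fun i : Fin (2 * ((p + q + 1) / 2)) => jpnLabel lam mu p q i) =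
      jpnLabels lam mu p q := by
  by_cases h : Even (p + q)
  · obtain ⟨m, hm⟩ := h
    refine List.ext_getElem ?_ fun i h1 h2 => ?_
    · simp only [jpnLabels, innerLabels, if_pos (show Even (p + q) from ⟨m, hm⟩),
        List.length_ofFn, List.length_append, List.length_map, List.length_range,
        List.length_reverse, List.length_nil]
      omega
    · simp only [List.length_ofFn] at h1
      simp only [jpnLabels, innerLabels, if_pos (show Even (p + q) from ⟨m, hm⟩), jpnLabel,
        List.nil_append, List.getElem_ofFn, List.getElem_append, List.getElem_map,
        List.getElem_range, List.getElem_reverse, List.length_map, List.length_range]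
      split_ifs <;> first | rfl | omega | skip
      congr 2
      omega
  · have h' := h
    rw [Nat.not_even_iff_odd] at h'
    obtain ⟨m, hm⟩ := h'
    refine List.ext_getElem ?_ fun i h1 h2 => ?_
    · simp only [jpnLabels, innerLabels, if_neg h,
        List.length_ofFn, List.length_append, List.length_map, List.length_range,
        List.length_reverse, List.length_singleton]
      omega
    · simp only [List.length_ofFn] at h1
      simp only [jpnLabels, innerLabels, if_neg h, jpnLabel,
        List.getElem_ofFn, List.getElem_append, List.getElem_map, List.getElem_singleton,
        List.getElem_range, List.getElem_reverse, List.length_map, List.length_range,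
        List.length_singleton]
      split_ifs <;> first | rfl | omega | skip
      congr 2
      omega

end FinalLabels

/-- **Józefiak–Pragacz–Nimmo type Pfaffian identity for ninth variation skew
Q-functions.**  For strict partitions `μ ⊆ λ` of lengths `q ≤ p`, with
`N = p + q` rounded up to an even number and `l = N - q` (so `l = p` or `p+1`
according to the parity of `p + q`, augmenting `λ` with a trailing zero part),
`Q_{λ/μ}(X,Y)` equals the Pfaffian of the antisymmetric block matrix with
upper-left entries `Q_{(λ_i,λ_j)}(X,Y)`, upper-right entries
`Q_{(λ_i - μ_{q-k+1})}(τ^{μ_{q-k+1}}(X,Y))` (column `k = 1,…,q`), lower-left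
the negative transpose of the upper-right, and zero lower-right block. -/
theorem QGen_JPN_pfaffian {R : Type*} [CommRing R] (n p q : ℕ) (lam mu : ℕ → ℕ)
    (hlam : ∀ i j, i < j → j < p → lam j < lam i) (hlampos : ∀ i, i < p → 0 < lam i)
    (hlamlen : ∀ i, p ≤ i → lam i = 0)
    (hmu : ∀ i j, i < j → j < q → mu j < mu i) (hmupos : ∀ i, i < q → 0 < mu i)
    (hmulen : ∀ i, q ≤ i → mu i = 0) (hqp : q ≤ p) (hsub : ∀ i, mu i ≤ lam i)
    (X Y : Fin n → ℤ → R) :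
    QGen n (shiftedCells lam mu p) X Y =
      pfaffian (m := (p + q + 1) / 2) (Matrix.of fun i j =>
        if (i : ℕ) < 2 * ((p + q + 1) / 2) - q then
          (if (j : ℕ) < 2 * ((p + q + 1) / 2) - q then
            (if (i : ℕ) < (j : ℕ) then qTwoRow n (lam (i : ℕ)) (lam (j : ℕ)) X Y
             else if (i : ℕ) = (j : ℕ) then 0
             else - qTwoRow n (lam (j : ℕ)) (lam (i : ℕ)) X Y)
          else
            qRowShift n
              ((lam (i : ℕ) : ℤ) - mu (q - 1 - ((j : ℕ) - (2 * ((p + q + 1) / 2) - q))))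
              ((mu (q - 1 - ((j : ℕ) - (2 * ((p + q + 1) / 2) - q))) : ℤ)) X Y)
        else
          (if (j : ℕ) < 2 * ((p + q + 1) / 2) - q then
            - qRowShift n
                ((lam (j : ℕ) : ℤ) - mu (q - 1 - ((i : ℕ) - (2 * ((p + q + 1) / 2) - q))))
                ((mu (q - 1 - ((i : ℕ) - (2 * ((p + q + 1) / 2) - q))) : ℤ)) X Y
          else 0)) := by
  have hl : StrictSeq lam p := ⟨fun i hi => hlam i (i + 1) (by omega) hi, hlampos, hlamlen⟩
  have hm : StrictSeq mu q := ⟨fun i hi => hmu i (i + 1) (by omega) hi, hmupos, hmulen⟩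
  have h := labelPfaffian_jpnLabels n X Y hl hm
  rw [if_pos hsub, ← ofFn_jpnLabel, labelPfaffian, List.map_ofFn,
    ← pfaffian_eq_pfFunctional] at h
  rw [← h]
  refine pfaffian_congr fun i j hij => ?_
  have hij' : (i : ℕ) < j := hij
  have hi := i.2
  have hj := j.2
  simp only [Matrix.of_apply, Function.comp_apply, jpnForm_labelVec]
  by_cases hjl : (j : ℕ) < 2 * ((p + q + 1) / 2) - q
  · have hip : (i : ℕ) < p := by omega
    rw [if_pos (by omega), if_pos hjl, if_pos hij', jpnLabel, jpnLabel, if_pos (by omega),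
      if_pos hjl, if_pos hip]
    by_cases hjp : (j : ℕ) < p
    · simp only [if_pos hjp, jpnEntry, if_pos (hlam _ _ hij' hjp)]
    · simp only [if_neg hjp, jpnEntry, hlamlen _ (not_lt.1 hjp)]
  · rw [if_neg hjl]
    by_cases hil : (i : ℕ) < 2 * ((p + q + 1) / 2) - q
    · rw [if_pos hil, jpnLabel, jpnLabel, if_pos hil, if_neg hjl]
      by_cases hip : (i : ℕ) < p
      · simp only [if_pos hip, jpnEntry]
      · rw [if_neg hip, jpnEntry, qRowShift_eq, if_neg]
        have := hmupos (q - 1 - ((j : ℕ) - (2 * ((p + q + 1) / 2) - q))) (by omega)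
        rw [hlamlen _ (not_lt.1 hip)]
        omega
    · rw [if_neg hil, if_neg hjl, jpnLabel, jpnLabel, if_neg hil, if_neg hjl, jpnEntry]
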